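/- Let ε ∈ (0,1], k ∈ {0,1}, ε_k = (k+ε)/2, and let p be a strictly pseudoconvex boundary point of class C^{k+2,ε} of a domain Ω in ℂⁿ. Then there exist a constant C > 0 and a neighborhood U of p such that for every z ∈ Ω ∩ U and every X ∈ ℂⁿ, κ_Ω(z;X) ≤ (1 + C·δ_Ω(z)^{ε_k}) · ( |⟨∂δ_Ω(z),X⟩|²/δ_Ω(z)² + L(z;X)/δ_Ω(z) )^{1/2}. -/

import Mathlib

open Metric MeasureTheory Set
open scoped NNReal ENNReal

noncomputable section

/-- Complex Euclidean `n`-space. -/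
abbrev Cn (n : ℕ) := EuclideanSpace ℂ (Fin n)

variable {n : ℕ}

instance : MeasurableSpace (Cn n) := borel _
instance : BorelSpace (Cn n) := ⟨rfl⟩
instance : InnerProductSpace ℝ (Cn n) := InnerProductSpace.rclikeToReal ℂ _

/-- `δ_Ω(z)`: the Euclidean distance from `z` to the boundary of `Ω`. -/
def bdist (Ω : Set (Cn n)) (z : Cn n) : ℝ := Metric.infDist z (frontier Ω)

/-- The squeezing function `σ_Ω(z)` of a (bounded) domain `Ω`. -/
def squeezing (Ω : Set (Cn n)) (z : Cn n) : ℝ :=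
  sSup {r : ℝ | 0 < r ∧ ∃ f : Cn n → Cn n,
    DifferentiableOn ℂ f Ω ∧ Set.InjOn f Ω ∧ Set.MapsTo f Ω (Metric.ball 0 1) ∧
    f z = 0 ∧ Metric.ball (0 : Cn n) r ⊆ f '' Ω}

/-- The Kobayashi metric `κ_Ω(z;X)`. -/
def kobayashi (Ω : Set (Cn n)) (z X : Cn n) : ℝ :=
  sInf {r : ℝ | ∃ (α : ℂ) (φ : ℂ → Cn n),
    DifferentiableOn ℂ φ (Metric.ball 0 1) ∧ Set.MapsTo φ (Metric.ball 0 1) Ω ∧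
    φ 0 = z ∧ α • deriv φ 0 = X ∧ r = ‖α‖}

/-- The Carathéodory metric `γ_Ω(z;X)`. -/
def caratheodory (Ω : Set (Cn n)) (z X : Cn n) : ℝ :=
  sSup {r : ℝ | ∃ f : Cn n → ℂ,
    DifferentiableOn ℂ f Ω ∧ Set.MapsTo f Ω (Metric.ball 0 1) ∧
    r = ‖fderiv ℂ f z X‖}

/-- `⟨∂ρ(q),X⟩ = Σ_j (∂ρ/∂z_j)(q) X_j`, expressed via the real differential:
`⟨∂ρ(q),X⟩ = (Dρ(q)X - i·Dρ(q)(iX))/2`. -/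
def cderiv (ρ : Cn n → ℝ) (q X : Cn n) : ℂ :=
  (((fderiv ℝ ρ q X : ℝ) : ℂ) - Complex.I * ((fderiv ℝ ρ q (Complex.I • X) : ℝ) : ℂ)) / 2

/-- The Levi form `L_ρ(q;X) = Σ_{j,k} (∂²ρ/∂z_j∂z̄_k)(q) X_j X̄_k`, expressed via the real
second differential: `L_ρ(q;X) = (D²ρ(q)[X,X] + D²ρ(q)[iX,iX])/4`. -/
def leviForm (ρ : Cn n → ℝ) (q X : Cn n) : ℝ :=
  (fderiv ℝ (fun w => fderiv ℝ ρ w X) q X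
    + fderiv ℝ (fun w => fderiv ℝ ρ w (Complex.I • X)) q (Complex.I • X)) / 4

/-- `p` is a strictly pseudoconvex boundary point of `Ω` of class `C^{m,ε}`. -/
def IsStrictPscPtHolder (Ω : Set (Cn n)) (p : Cn n) (m : ℕ) (ε : ℝ) : Prop :=
  p ∈ frontier Ω ∧ ∃ W : Set (Cn n), IsOpen W ∧ p ∈ W ∧ ∃ ρ : Cn n → ℝ,
    ContDiffOn ℝ m ρ W ∧
    (∃ C : ℝ≥0, HolderOnWith C ε.toNNReal (iteratedFDeriv ℝ m ρ) W) ∧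
    Ω ∩ W = {z ∈ W | ρ z < 0} ∧
    (∀ q ∈ frontier Ω ∩ W, fderiv ℝ ρ q ≠ 0) ∧
    (∀ q ∈ frontier Ω ∩ W, ∀ X : Cn n, X ≠ 0 → cderiv ρ q X = 0 → 0 < leviForm ρ q X)

/-- `p` is a strictly pseudoconvex boundary point of `Ω` of class `C²`. -/
def IsStrictPscPtC2 (Ω : Set (Cn n)) (p : Cn n) : Prop :=
  p ∈ frontier Ω ∧ ∃ W : Set (Cn n), IsOpen W ∧ p ∈ W ∧ ∃ ρ : Cn n → ℝ,
    ContDiffOn ℝ 2 ρ W ∧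
    Ω ∩ W = {z ∈ W | ρ z < 0} ∧
    (∀ q ∈ frontier Ω ∩ W, fderiv ℝ ρ q ≠ 0) ∧
    (∀ q ∈ frontier Ω ∩ W, ∀ X : Cn n, X ≠ 0 → cderiv ρ q X = 0 → 0 < leviForm ρ q X)

/-- An open set `D ⊆ ℂⁿ` is pseudoconvex: `u = -log dist(·, Dᶜ)` is plurisubharmonic on `D`. -/
def IsPseudoconvex (D : Set (Cn n)) : Prop :=
  IsOpen D ∧
  UpperSemicontinuousOn (fun z => -Real.log (Metric.infDist z Dᶜ)) D ∧
  ∀ a ∈ D, ∀ w : Cn n, ∀ r : ℝ, 0 < r →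
    (∀ l : ℂ, ‖l‖ ≤ r → a + l • w ∈ D) →
    -Real.log (Metric.infDist a Dᶜ) ≤
      (1 / (2 * Real.pi)) * ∫ θ in (0:ℝ)..(2 * Real.pi),
        -Real.log (Metric.infDist (a + ((r : ℂ) * Complex.exp (θ * Complex.I)) • w) Dᶜ)

/-- `cl(Ω)` admits a Stein neighborhood basis. -/
def HasSteinBasis (Ω : Set (Cn n)) : Prop :=
  ∀ W : Set (Cn n), IsOpen W → closure Ω ⊆ W →
    ∃ U : Set (Cn n), IsPseudoconvex U ∧ closure Ω ⊆ U ∧ U ⊆ W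

/-- The squared `L²`-norm of `f` on `D` (as an extended nonnegative real). -/
def L2normSq (D : Set (Cn n)) (f : Cn n → ℂ) : ℝ≥0∞ := ∫⁻ w in D, (‖f w‖₊ : ℝ≥0∞) ^ 2

/-- `J⁰_D(z) = sup {|f(z)|² : f ∈ L²_h(D), ‖f‖_D ≤ 1}`; equals the Bergman kernel on the
diagonal. -/
def J0 (D : Set (Cn n)) (z : Cn n) : ℝ :=
  sSup {v : ℝ | ∃ f : Cn n → ℂ, DifferentiableOn ℂ f D ∧ L2normSq D f ≤ 1 ∧ v = ‖f z‖ ^ 2}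

/-- `J¹_D(z;X) = sup {|f'(z)X|² : f ∈ L²_h(D), ‖f‖_D ≤ 1, f(z) = 0}`. -/
def J1 (D : Set (Cn n)) (z X : Cn n) : ℝ :=
  sSup {v : ℝ | ∃ f : Cn n → ℂ, DifferentiableOn ℂ f D ∧ L2normSq D f ≤ 1 ∧ f z = 0 ∧
    v = ‖fderiv ℂ f z X‖ ^ 2}

/-- `J²_D(z;X,Y) = sup {|Σ_{j,k} f_{ζ_jζ_k}(z) X_j Y_k|² : f ∈ L²_h(D), ‖f‖_D ≤ 1,
f(z) = 0, f'(z) = 0}`. -/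
def J2 (D : Set (Cn n)) (z X Y : Cn n) : ℝ :=
  sSup {v : ℝ | ∃ f : Cn n → ℂ, DifferentiableOn ℂ f D ∧ L2normSq D f ≤ 1 ∧ f z = 0 ∧
    fderiv ℂ f z = 0 ∧ v = ‖fderiv ℂ (fun w => fderiv ℂ f w Y) z X‖ ^ 2}

/-- The Bergman metric `β_D(z;X) = (J¹_D(z;X)/J⁰_D(z))^{1/2}`. -/
def bergman (D : Set (Cn n)) (z X : Cn n) : ℝ := Real.sqrt (J1 D z X / J0 D z)

/-- The bisectional curvature of the Bergman metric. -/
def bisect (D : Set (Cn n)) (z X Y : Cn n) : ℝ :=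
  2 - J0 D z * J2 D z X Y / (J1 D z X * J1 D z Y)

/-- The holomorphic sectional curvature `s_D(z;X)` of the Bergman metric. -/
def sectCurv (D : Set (Cn n)) (z X : Cn n) : ℝ := bisect D z X X

/-- The Ricci curvature `r_D(z;X)` of the Bergman metric (w.r.t. the standard basis). -/
def ricciCurv (D : Set (Cn n)) (z X : Cn n) : ℝ :=
  ∑ j : Fin n, bisect D z (EuclideanSpace.single j 1) X

/-- The scalar curvature `t_D(z)` of the Bergman metric. -/
def scalarCurv (D : Set (Cn n)) (z : Cn n) : ℝ :=
  ∑ j : Fin n, ricciCurv D z (EuclideanSpace.single j 1)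

/-- `M(z;X) = ( |⟨∂δ_Ω(z),X⟩|²/δ_Ω(z)² + L(z;X)/δ_Ω(z) )^{1/2}`, where `L` is the Levi form
of `-δ_Ω`. -/
def Mfun (Ω : Set (Cn n)) (z X : Cn n) : ℝ :=
  Real.sqrt (‖cderiv (bdist Ω) z X‖ ^ 2 / (bdist Ω z) ^ 2
    + leviForm (fun w => -(bdist Ω w)) z X / bdist Ω z)

/-- The sesquilinear form of the Bergman metric, recovered from `β²` by polarization. -/
def bergForm (D : Set (Cn n)) (z X Y : Cn n) : ℂ :=
  (((J1 D z (X + Y) / J0 D z : ℝ) : ℂ) - ((J1 D z (X - Y) / J0 D z : ℝ) : ℂ)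
    + Complex.I * ((J1 D z (X + Complex.I • Y) / J0 D z : ℝ) : ℂ)
    - Complex.I * ((J1 D z (X - Complex.I • Y) / J0 D z : ℝ) : ℂ)) / 4

/-- The Hermitian matrix `(B_{jk}(z))` of the Bergman metric in the standard coordinates. -/
def bergMat (D : Set (Cn n)) (z : Cn n) : Matrix (Fin n) (Fin n) ℂ :=
  fun j k => bergForm D z (EuclideanSpace.single j 1) (EuclideanSpace.single k 1)

/-- The canonical Bergman invariant `J_D(z) = Δ_D(z)/K_D(z)`. -/
def canonInvariant (D : Set (Cn n)) (z : Cn n) : ℂ :=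
  (bergMat D z).det / ((J0 D z : ℝ) : ℂ)

/-! Near `p` the signed distance `d` to the boundary is as smooth as the given defining function.
If `a` is large, then the Levi form of `r = d + a d²` is positive definite near `p`. For `z` near
`p` and `X` with `M_r(z;X) = 1`, Taylor's formula of order `k + 2` yields a disc
`w ↦ z + wX + w²Y + w³Z` along which all pure terms of `r` of order two and three cancel, so that
`r ≤ r(z) + 2 Re(w⟨∂r(z),X⟩) + |w|² L_r(z;X) + error`. The error-free inequality `< 0` describes a
disc in the `w`-plane, the image of the unit disc under the Möbius map `ξ ↦ ξ/(1 + uξ)`, where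
`u = ⟨∂r(z),X⟩/|r(z)|`; on `|ξ| ≤ 1 - K|r(z)|^ε_k` the error is absorbed. Finally
`M_r ≤ (1 + a|d|) M_d`. -/

set_option maxSynthPendingDepth 3

section HolderClasses

open Filter Topology

universe u

theorem eventually_fderiv_eq_inverse {E F : Type*} [NormedAddCommGroup E] [NormedSpace ℝ E]
    [CompleteSpace E] [NormedAddCommGroup F] [NormedSpace ℝ F] {a : E} {f : E → F} {g : F → E}
    (hf : ContDiffAt ℝ 1 f a) {e : E ≃L[ℝ] F} (he : fderiv ℝ f a = e) (hga : g (f a) = a)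
    (hg : ContDiffAt ℝ 1 g (f a)) (hfg : ∀ᶠ y in 𝓝 (f a), f (g y) = y) :
    ∀ᶠ y in 𝓝 (f a), fderiv ℝ g y = (fderiv ℝ f (g y)).inverse := by
  have hgt : Tendsto g (𝓝 (f a)) (𝓝 a) := by simpa [ContinuousAt, hga] using hg.continuousAt
  have hequiv : ∀ᶠ x in 𝓝 a, ∃ e' : E ≃L[ℝ] F, (e' : E →L[ℝ] F) = fderiv ℝ f x :=
    (hf.fderiv_right (m := 0) (by simp)).continuousAt.eventually (by rw [he]; exact e.nhds)
  filter_upwards [hg.eventually (by simp), hgt.eventually hequiv,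
    hgt.eventually (hf.eventually (by simp)), hfg.eventually_nhds] with y hgy ⟨e', he'⟩ hfy hfgy
  have hcomp : (fderiv ℝ f (g y)).comp (fderiv ℝ g y) = ContinuousLinearMap.id ℝ F :=
    ((hfy.differentiableAt one_ne_zero).hasFDerivAt.comp y
      (hgy.differentiableAt one_ne_zero).hasFDerivAt).unique
      ((hasFDerivAt_id y).congr_of_eventuallyEq hfgy)
  rw [← he'] at hcomp ⊢
  rw [ContinuousLinearMap.inverse_equiv]
  ext v
  exact e'.injective (by simpa using congr($hcomp v))

/-- `ContDiffHolderAt ε m f a`: the map `f` is of class `C^{m,ε}` near `a`, that is, `f` is `C^m` at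
`a` and its `m`-th derivative is `ε`-Hölder on some neighbourhood of `a`. -/
def ContDiffHolderAt {E F : Type*} [NormedAddCommGroup E] [NormedSpace ℝ E] [NormedAddCommGroup F]
    [NormedSpace ℝ F] (ε : ℝ≥0) (m : ℕ) (f : E → F) (a : E) : Prop :=
  ContDiffAt ℝ m f a ∧ ∃ C : ℝ≥0, ∃ U ∈ 𝓝 a, HolderOnWith C ε (iteratedFDeriv ℝ m f) U

namespace ContDiffHolderAt

variable {E F G K : Type u} [NormedAddCommGroup E] [NormedSpace ℝ E]
  [NormedAddCommGroup F] [NormedSpace ℝ F] [NormedAddCommGroup G] [NormedSpace ℝ G]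
  [NormedAddCommGroup K] [NormedSpace ℝ K] {ε : ℝ≥0} {m : ℕ} {f g : E → F} {a : E}

theorem contDiffAt (hf : ContDiffHolderAt ε m f a) : ContDiffAt ℝ m f a := hf.1

theorem continuousAt (hf : ContDiffHolderAt ε m f a) : ContinuousAt f a := hf.1.continuousAt

theorem zero_iff : ContDiffHolderAt ε 0 f a ↔
    ContDiffAt ℝ 0 f a ∧ ∃ C : ℝ≥0, ∃ U ∈ 𝓝 a, HolderOnWith C ε f U := by
  simp only [ContDiffHolderAt, HolderOnWith, iteratedFDeriv_zero_eq_comp, Function.comp_apply,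
    LinearIsometryEquiv.edist_map, Nat.cast_zero]

theorem succ_iff : ContDiffHolderAt ε (m + 1) f a ↔
    (∀ᶠ x in 𝓝 a, DifferentiableAt ℝ f x) ∧ ContDiffHolderAt ε m (fderiv ℝ f) a := by
  simp only [ContDiffHolderAt, HolderOnWith, iteratedFDeriv_succ_eq_comp_right,
    Function.comp_apply, LinearIsometryEquiv.edist_map, Nat.cast_succ, ← and_assoc]
  refine and_congr_left fun _ => ⟨fun hf => ?_, fun hf => ?_⟩
  · exact ⟨(hf.eventually (by simp)).mono fun x hx => hx.differentiableAt (by simp),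
      hf.fderiv_right le_rfl⟩
  · exact contDiffAt_succ_iff_hasFDerivAt.2
      ⟨fderiv ℝ f, ⟨_, hf.1, fun x hx => DifferentiableAt.hasFDerivAt hx⟩, hf.2⟩

theorem congr (hf : ContDiffHolderAt ε m f a) (hfg : f =ᶠ[𝓝 a] g) : ContDiffHolderAt ε m g a := by
  obtain ⟨hd, C, U, hU, hC⟩ := hf
  refine ⟨hd.congr_of_eventuallyEq hfg.symm, C, _, inter_mem hU (hfg.iteratedFDeriv ℝ m), ?_⟩
  rintro x ⟨hx, hfgx⟩ y ⟨hy, hfgy⟩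
  rw [← show _ = _ from hfgx, ← show _ = _ from hfgy]
  exact hC x hx y hy

theorem of_contDiffAt_succ (hε : ε ≤ 1) (hf : ContDiffAt ℝ (m + 1 : ℕ) f a) :
    ContDiffHolderAt ε m f a := by
  obtain ⟨C, t, ht, hC⟩ := ContDiffAt.exists_lipschitzOnWith
    (hf.iteratedFDeriv_right (m := 1) (i := m) (by norm_cast; omega))
  have hbdd : ∀ x ∈ t ∩ ball a 1, ∀ y ∈ t ∩ ball a 1, edist x y ≤ (2 : ℝ≥0) := fun x hx y hy => by
    rw [edist_le_coe, ← NNReal.coe_le_coe, coe_nndist]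
    have := dist_triangle_right x y a
    have := mem_ball.1 hx.2
    have := mem_ball.1 hy.2
    norm_num
    linarith
  exact ⟨hf.of_le (by norm_cast; omega), _, _, inter_mem ht (ball_mem_nhds a one_pos),
    ((holderOnWith_one.2 hC).mono inter_subset_left).of_le hbdd hε⟩

theorem of_succ (hε : ε ≤ 1) (hf : ContDiffHolderAt ε (m + 1) f a) : ContDiffHolderAt ε m f a :=
  of_contDiffAt_succ hε hf.1

theorem of_le (hε : ε ≤ 1) {i : ℕ} (hi : i ≤ m) (hf : ContDiffHolderAt ε m f a) :
    ContDiffHolderAt ε i f a := by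
  obtain rfl | hi := hi.eq_or_lt
  exacts [hf, of_contDiffAt_succ hε (hf.1.of_le (by exact_mod_cast hi))]

theorem add (hf : ContDiffHolderAt ε m f a) (hg : ContDiffHolderAt ε m g a) :
    ContDiffHolderAt ε m (fun x => f x + g x) a := by
  obtain ⟨hdf, C, U, hU, hC⟩ := hf
  obtain ⟨hdg, C', U', hU', hC'⟩ := hg
  refine ⟨hdf.add hdg, C + C', (U ∩ U') ∩ {x | ContDiffAt ℝ m f x ∧ ContDiffAt ℝ m g x},
    inter_mem (inter_mem hU hU') ((hdf.eventually (by simp)).and (hdg.eventually (by simp))), ?_⟩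
  rintro x ⟨⟨hx, hx'⟩, hfx, hgx⟩ y ⟨⟨hy, hy'⟩, hfy, hgy⟩
  rw [fun_iteratedFDeriv_add_apply hfx hgx, fun_iteratedFDeriv_add_apply hfy hgy,
    ENNReal.coe_add, add_mul]
  exact (edist_add_add_le _ _ _ _).trans (add_le_add (hC x hx y hy) (hC' x hx' y hy'))

theorem contDiffAt_comp_zero {g : F → G} (hg : ContDiffAt ℝ 1 g (f a))
    (hf : ContDiffHolderAt ε 0 f a) : ContDiffHolderAt ε 0 (fun x => g (f x)) a := by
  obtain ⟨hd, C, U, hU, hC⟩ := zero_iff.1 hf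
  obtain ⟨C', t, ht, hC'⟩ := hg.exists_lipschitzOnWith
  have := ((holderOnWith_one.2 hC').comp (hC.mono inter_subset_left) (s := U ∩ f ⁻¹' t)
    fun x hx => hx.2)
  rw [one_mul] at this
  exact zero_iff.2 ⟨(hg.of_le zero_le_one).comp a hd, _, _,
    inter_mem hU (hd.continuousAt ht), this⟩

theorem bilin_zero (B : F →L[ℝ] G →L[ℝ] K) {f : E → F} {g : E → G}
    (hf : ContDiffHolderAt ε 0 f a) (hg : ContDiffHolderAt ε 0 g a) :
    ContDiffHolderAt ε 0 (fun x => B (f x) (g x)) a := by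
  obtain ⟨hdf, C, U, hU, hC⟩ := zero_iff.1 hf
  obtain ⟨hdg, C', U', hU', hC'⟩ := zero_iff.1 hg
  refine contDiffAt_comp_zero (f := fun x => (f x, g x)) (g := fun q => B q.1 q.2)
    B.isBoundedBilinearMap.contDiff.contDiffAt
    (zero_iff.2 ⟨hdf.prodMk hdg, max C C', U ∩ U', inter_mem hU hU', ?_⟩)
  exact fun x hx y hy => max_le
    ((hC.mono_const (le_max_left C C')) x hx.1 y hy.1)
    ((hC'.mono_const (le_max_right C C')) x hx.2 y hy.2)

theorem bilin (hε : ε ≤ 1) : ∀ {m : ℕ} {F G K : Type u} [NormedAddCommGroup F] [NormedSpace ℝ F]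
    [NormedAddCommGroup G] [NormedSpace ℝ G] [NormedAddCommGroup K] [NormedSpace ℝ K]
    (B : F →L[ℝ] G →L[ℝ] K) {f : E → F} {g : E → G}, ContDiffHolderAt ε m f a →
    ContDiffHolderAt ε m g a → ContDiffHolderAt ε m (fun x => B (f x) (g x)) a
  | 0, _, _, _, _, _, _, _, _, _, B, _, _, hf, hg => bilin_zero B hf hg
  | m + 1, F, G, K, _, _, _, _, _, _, B, f, g, hf, hg => by
    have hd : ∀ᶠ x in 𝓝 a, HasFDerivAt (fun x => B (f x) (g x))
        (B.precompR E (f x) (fderiv ℝ g x) + B.precompL E (fderiv ℝ f x) (g x)) x := by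
      filter_upwards [(succ_iff.1 hf).1, (succ_iff.1 hg).1] with x hfx hgx
      exact B.hasFDerivAt_of_bilinear hfx.hasFDerivAt hgx.hasFDerivAt
    exact succ_iff.2 ⟨hd.mono fun x hx => hx.differentiableAt,
      ((bilin hε (B.precompR E) (hf.of_succ hε) (succ_iff.1 hg).2).add
        (bilin hε (B.precompL E) (succ_iff.1 hf).2 (hg.of_succ hε))).congr
        (hd.mono fun x hx => hx.fderiv.symm)⟩

theorem comp_of_fderiv (hε : ε ≤ 1) {g : F → G} (hf : ContDiffHolderAt ε (m + 1) f a)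
    (hg : ∀ᶠ y in 𝓝 (f a), DifferentiableAt ℝ g y)
    (hgf : ContDiffHolderAt ε m (fun x => fderiv ℝ g (f x)) a) :
    ContDiffHolderAt ε (m + 1) (fun x => g (f x)) a := by
  have hd : ∀ᶠ x in 𝓝 a, HasFDerivAt (fun x => g (f x))
      (ContinuousLinearMap.compL ℝ E F G (fderiv ℝ g (f x)) (fderiv ℝ f x)) x := by
    filter_upwards [hf.continuousAt.eventually hg, (succ_iff.1 hf).1] with x hgx hfx
    exact hgx.hasFDerivAt.comp x hfx.hasFDerivAt
  exact succ_iff.2 ⟨hd.mono fun x hx => hx.differentiableAt,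
    (bilin hε (ContinuousLinearMap.compL ℝ E F G) hgf (succ_iff.1 hf).2).congr
      (hd.mono fun x hx => hx.fderiv.symm)⟩

theorem contDiffAt_comp (hε : ε ≤ 1) : ∀ {m : ℕ} {G : Type u} [NormedAddCommGroup G]
    [NormedSpace ℝ G] {g : F → G}, ContDiffAt ℝ (m + 1 : ℕ) g (f a) → ContDiffHolderAt ε m f a →
    ContDiffHolderAt ε m (fun x => g (f x)) a
  | 0, _, _, _, _, hg, hf => contDiffAt_comp_zero hg hf
  | _ + 1, _, _, _, _, hg, hf => comp_of_fderiv hε hf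
      ((hg.eventually (by simp)).mono fun _ hx => hx.differentiableAt (by simp))
      (contDiffAt_comp hε (hg.fderiv_right (by norm_cast)) (hf.of_succ hε))

theorem comp_zero {g : F → G} (hg : ContDiffHolderAt ε 0 g (f a)) (hf : ContDiffAt ℝ 1 f a) :
    ContDiffHolderAt ε 0 (fun x => g (f x)) a := by
  obtain ⟨hd, C, U, hU, hC⟩ := zero_iff.1 hg
  obtain ⟨C', t, ht, hC'⟩ := hf.exists_lipschitzOnWith
  have := hC.comp ((holderOnWith_one.2 hC').mono inter_subset_left) (s := t ∩ f ⁻¹' U)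
    fun x hx => hx.2
  rw [mul_one] at this
  exact zero_iff.2 ⟨hd.comp a (hf.of_le zero_le_one), _, _,
    inter_mem ht (hf.continuousAt hU), this⟩

theorem comp (hε : ε ≤ 1) (hf₁ : ContDiffAt ℝ 1 f a) : ∀ {m : ℕ} {G : Type u}
    [NormedAddCommGroup G] [NormedSpace ℝ G] {g : F → G}, ContDiffHolderAt ε m g (f a) →
    ContDiffHolderAt ε m f a → ContDiffHolderAt ε m (fun x => g (f x)) a
  | 0, _, _, _, _, hg, _ => comp_zero hg hf₁
  | _ + 1, _, _, _, _, hg, hf => comp_of_fderiv hε hf (succ_iff.1 hg).1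
      (comp hε hf₁ (succ_iff.1 hg).2 (hf.of_succ hε))

theorem prodMk (hε : ε ≤ 1) {g : E → G} (hf : ContDiffHolderAt ε m f a)
    (hg : ContDiffHolderAt ε m g a) : ContDiffHolderAt ε m (fun x => (f x, g x)) a := by
  simpa using (hf.contDiffAt_comp hε (ContinuousLinearMap.inl ℝ F G).contDiff.contDiffAt).add
    (hg.contDiffAt_comp hε (ContinuousLinearMap.inr ℝ F G).contDiff.contDiffAt)

theorem localInverse (hε : ε ≤ 1) [CompleteSpace E] {f : E → F} {g : F → E}
    (hf : ContDiffHolderAt ε (m + 1) f a) {e : E ≃L[ℝ] F} (he : fderiv ℝ f a = e)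
    (hga : g (f a) = a) (hg : ContDiffAt ℝ 1 g (f a)) (hfg : ∀ᶠ y in 𝓝 (f a), f (g y) = y) :
    ContDiffHolderAt ε (m + 1) g (f a) := by
  have hinv := eventually_fderiv_eq_inverse (hf.contDiffAt.of_le (by simp)) he hga hg hfg
  suffices ∀ i ≤ m + 1, ContDiffHolderAt ε i g (f a) from this _ le_rfl
  intro i hi
  induction i with
  | zero => exact of_contDiffAt_succ hε hg
  | succ i ih =>
    have hcomp : ContDiffHolderAt ε i (fun y => fderiv ℝ f (g y)) (f a) :=
      comp hε hg (hga.symm ▸ (succ_iff.1 hf).2.of_le hε (by omega)) (ih (by omega))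
    refine succ_iff.2 ⟨(hg.eventually (by simp)).mono fun y hy => hy.differentiableAt (by simp),
      (contDiffAt_comp hε ?_ hcomp).congr (hinv.mono fun y hy => hy.symm)⟩
    rw [hga, he]
    exact contDiffAt_map_inverse e

end ContDiffHolderAt

theorem eventually_forall_Icc_add_smul_mem {E : Type*} [NormedAddCommGroup E] [NormedSpace ℝ E]
    {a : E} {U : Set E} (hU : U ∈ 𝓝 a) :
    ∀ᶠ q : E × E in 𝓝 (a, 0), ∀ t ∈ Icc (0 : ℝ) 1, q.1 + t • q.2 ∈ U := by
  obtain ⟨r, hr, hrU⟩ := Metric.mem_nhds_iff.1 hU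
  have hnear : ∀ᶠ q : E × E in 𝓝 (a, 0), ‖q.1 - a‖ + ‖q.2‖ < r :=
    ContinuousAt.eventually_lt (by fun_prop) continuousAt_const (by simpa)
  filter_upwards [hnear] with q hq t ht
  refine hrU (mem_ball_iff_norm.2 ?_)
  calc ‖q.1 + t • q.2 - a‖ = ‖(q.1 - a) + t • q.2‖ := by congr 1; abel
    _ ≤ ‖q.1 - a‖ + ‖t • q.2‖ := norm_add_le _ _
    _ ≤ ‖q.1 - a‖ + ‖q.2‖ := by
      gcongr
      rw [norm_smul, Real.norm_of_nonneg ht.1]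
      exact mul_le_of_le_one_left (norm_nonneg _) ht.2
    _ < r := hq

section Taylor

variable {E F : Type*} [NormedAddCommGroup E] [NormedSpace ℝ E] [NormedAddCommGroup F]
  [NormedSpace ℝ F] [CompleteSpace F] {f : E → F} {m : ℕ} {x y : E}

theorem sub_sum_iteratedFDeriv_eq_integral
    (hf : ∀ t ∈ Icc (0 : ℝ) 1, ContDiffAt ℝ (m + 1 : ℕ) f (x + t • y)) :
    f (x + y) - ∑ k ∈ Finset.range (m + 2), (k.factorial : ℝ)⁻¹ •
      iteratedFDeriv ℝ k f x (fun _ => y) = (m.factorial : ℝ)⁻¹ • ∫ t in (0 : ℝ)..1, (1 - t) ^ m •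
        (iteratedFDeriv ℝ (m + 1) f (x + t • y) - iteratedFDeriv ℝ (m + 1) f x) fun _ => y := by
  set g : ℝ → F := fun t => iteratedFDeriv ℝ (m + 1) f (x + t • y) fun _ => y with hg
  set g₀ : F := iteratedFDeriv ℝ (m + 1) f x fun _ => y with hg₀
  have hgcont : ContinuousOn g (Icc 0 1) := fun t ht => by
    have hd : ContinuousAt (iteratedFDeriv ℝ (m + 1) f) (x + t • y) :=
      ((hf t ht).iteratedFDeriv_right (m := 0) (i := m + 1) (by simp)).continuousAt
    have hline : ContinuousAt (fun t : ℝ => x + t • y) t := by fun_prop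
    exact ((continuous_eval_const (fun _ : Fin (m + 1) => y)).continuousAt.comp
      (hd.comp_of_eq hline rfl)).continuousWithinAt
  have hint : IntervalIntegrable (fun t : ℝ => (1 - t) ^ m • g t) volume 0 1 :=
    (ContinuousOn.smul (by fun_prop) hgcont).intervalIntegrable_of_Icc zero_le_one
  have hint₀ : IntervalIntegrable (fun t : ℝ => (1 - t) ^ m • g₀) volume 0 1 :=
    (by fun_prop : Continuous fun t : ℝ => (1 - t) ^ m • g₀).intervalIntegrable _ _
  have hpow : ∫ t in (0 : ℝ)..1, (1 - t) ^ m = ((m : ℝ) + 1)⁻¹ := by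
    simp [intervalIntegral.integral_comp_sub_left (fun t : ℝ => t ^ m)]
  rw [map_add_eq_sum_add_integral_iteratedFDeriv hf, Finset.sum_range_succ _ (m + 1)]
  simp only [sub_apply, smul_sub]
  rw [intervalIntegral.integral_sub hint hint₀, intervalIntegral.integral_smul_const, hpow,
    Nat.factorial_succ]
  simp only [Nat.cast_mul, mul_inv, Nat.cast_succ, smul_sub, smul_smul, hg, hg₀,
    mul_comm (m.factorial : ℝ)⁻¹]
  abel

theorem norm_sub_sum_iteratedFDeriv_le {M : ℝ}
    (hf : ∀ t ∈ Icc (0 : ℝ) 1, ContDiffAt ℝ (m + 1 : ℕ) f (x + t • y))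
    (hM : ∀ t ∈ Icc (0 : ℝ) 1,
      ‖iteratedFDeriv ℝ (m + 1) f (x + t • y) - iteratedFDeriv ℝ (m + 1) f x‖ ≤ M) :
    ‖f (x + y) - ∑ k ∈ Finset.range (m + 2), (k.factorial : ℝ)⁻¹ •
      iteratedFDeriv ℝ k f x (fun _ => y)‖ ≤ M * ‖y‖ ^ (m + 1) := by
  set D : ℝ → E [×m + 1]→L[ℝ] F :=
    fun t => iteratedFDeriv ℝ (m + 1) f (x + t • y) - iteratedFDeriv ℝ (m + 1) f x
  have hle : ∀ t ∈ uIoc (0 : ℝ) 1, ‖(1 - t) ^ m • D t fun _ => y‖ ≤ M * ‖y‖ ^ (m + 1) :=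
    fun t ht => by
    rw [uIoc_of_le zero_le_one] at ht
    calc ‖(1 - t) ^ m • D t fun _ => y‖ ≤ 1 * ‖D t fun _ => y‖ := by
          rw [norm_smul, norm_pow, Real.norm_of_nonneg (by linarith [ht.2])]
          gcongr
          exact pow_le_one₀ (by linarith [ht.2]) (by linarith [ht.1])
      _ ≤ ‖D t‖ * ‖y‖ ^ (m + 1) := by simpa using (D t).le_opNorm fun _ => y
      _ ≤ M * ‖y‖ ^ (m + 1) := by gcongr; exact hM t ⟨ht.1.le, ht.2⟩
  rw [sub_sum_iteratedFDeriv_eq_integral hf, norm_smul, norm_inv, RCLike.norm_natCast]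
  have hint := intervalIntegral.norm_integral_le_of_norm_le_const hle
  rw [sub_zero, abs_one, mul_one] at hint
  exact (mul_le_of_le_one_left (norm_nonneg _)
    (inv_le_one_of_one_le₀ (by exact_mod_cast m.factorial_pos))).trans hint

theorem ContDiffHolderAt.isBigO_taylor {ε : ℝ≥0} {a : E} (hf : ContDiffHolderAt ε (m + 1) f a) :
    (fun q : E × E => f (q.1 + q.2) - ∑ k ∈ Finset.range (m + 2), (k.factorial : ℝ)⁻¹ •
      iteratedFDeriv ℝ k f q.1 (fun _ => q.2)) =O[𝓝 (a, 0)]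
    fun q => ‖q.2‖ ^ (m + 1 + ε : ℝ) := by
  obtain ⟨hd, C, U, hU, hC⟩ := hf
  refine Asymptotics.IsBigO.of_bound C ?_
  filter_upwards [eventually_forall_Icc_add_smul_mem (inter_mem hU (hd.eventually (by simp)))]
    with q hq
  refine (norm_sub_sum_iteratedFDeriv_le (M := C * ‖q.2‖ ^ (ε : ℝ)) (fun t ht => (hq t ht).2)
    fun t ht => ?_).trans_eq ?_
  · have h0 := (hq 0 ⟨le_rfl, zero_le_one⟩).1
    rw [zero_smul, add_zero] at h0
    refine (dist_eq_norm _ _).symm.trans_le ((hC.dist_le (hq t ht).1 h0).trans ?_)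
    rw [dist_self_add_left, norm_smul, Real.norm_of_nonneg ht.1]
    refine mul_le_mul_of_nonneg_left
      (Real.rpow_le_rpow (mul_nonneg ht.1 (norm_nonneg _)) ?_ ε.2) C.2
    exact mul_le_of_le_one_left (norm_nonneg q.2) ht.2
  · rw [Real.norm_of_nonneg (by positivity), mul_assoc, mul_comm (‖q.2‖ ^ (ε : ℝ)),
      Real.rpow_add_of_nonneg (norm_nonneg q.2) (by positivity) ε.coe_nonneg]
    norm_cast

end Taylor

end HolderClasses

section SignedDistance

open Filter Topology InnerProductSpace

variable {E : Type} [NormedAddCommGroup E] [InnerProductSpace ℝ E]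

section Complete

variable [CompleteSpace E] {ε : ℝ≥0} {m : ℕ} {ρ : E → ℝ} {p q : E}

/-- The unit normal `∇ρ/‖∇ρ‖` of the level set of `ρ` through `q`; it is `0` where `∇ρ` vanishes. -/
def unitNormal (ρ : E → ℝ) (q : E) : E :=
  (toDual ℝ E).symm (‖fderiv ℝ ρ q‖⁻¹ • fderiv ℝ ρ q)

theorem inner_unitNormal (v : E) :
    ⟪unitNormal ρ q, v⟫_ℝ = ‖fderiv ℝ ρ q‖⁻¹ * fderiv ℝ ρ q v := by
  rw [unitNormal, toDual_symm_apply]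
  rfl

theorem norm_unitNormal (hq : fderiv ℝ ρ q ≠ 0) : ‖unitNormal ρ q‖ = 1 := by
  rw [unitNormal, LinearIsometryEquiv.norm_map, norm_smul, norm_inv, norm_norm,
    inv_mul_cancel₀ (norm_ne_zero_iff.2 hq)]

theorem fderiv_unitNormal_self (hq : fderiv ℝ ρ q ≠ 0) :
    fderiv ℝ ρ q (unitNormal ρ q) = ‖fderiv ℝ ρ q‖ := by
  have h := inner_unitNormal (ρ := ρ) (q := q) (unitNormal ρ q)
  rw [real_inner_self_eq_norm_sq, norm_unitNormal hq] at h
  field_simp [norm_ne_zero_iff.2 hq] at h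
  linarith

theorem ContDiffHolderAt.unitNormal (hε : ε ≤ 1) (hρ : ContDiffHolderAt ε (m + 1) ρ p)
    (hp : fderiv ℝ ρ p ≠ 0) : ContDiffHolderAt ε m (unitNormal ρ) p := by
  refine contDiffAt_comp hε
    (g := fun A : E →L[ℝ] ℝ => (toDual ℝ E).symm (‖(toDual ℝ E).symm A‖⁻¹ • A)) ?_
    (succ_iff.1 hρ).2 |>.congr (.of_forall fun q => ?_)
  · have hsymm : ContDiff ℝ (m + 1 : ℕ) (toDual ℝ E).symm := by
      exact (toDual ℝ E).symm.contDiff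
    have hne : (toDual ℝ E).symm (fderiv ℝ ρ p) ≠ 0 := by simpa using hp
    exact hsymm.contDiffAt.comp _ (((hsymm.contDiffAt.norm ℝ hne).inv
      (norm_ne_zero_iff.2 hne)).smul contDiffAt_id)
  · simp [_root_.unitNormal]

theorem inner_unitNormal_fderiv_unitNormal (hε : ε ≤ 1)
    (hρ : ContDiffHolderAt ε (m + 2) ρ p) (hp : fderiv ℝ ρ p ≠ 0) :
    ∀ᶠ q in 𝓝 p, ∀ v, ⟪unitNormal ρ q, fderiv ℝ (unitNormal ρ) q v⟫_ℝ = 0 := by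
  have hne : ∀ᶠ q in 𝓝 p, fderiv ℝ ρ q ≠ 0 :=
    (ContDiffHolderAt.succ_iff.1 hρ).2.continuousAt.eventually_ne hp
  filter_upwards [hne.eventually_nhds, (ContDiffHolderAt.succ_iff.1 (hρ.unitNormal hε hp)).1]
    with q hq hν v
  have hunit : HasFDerivAt (fun q => ‖unitNormal ρ q‖ ^ 2) (0 : E →L[ℝ] ℝ) q :=
    (hasFDerivAt_const (1 : ℝ) q).congr_of_eventuallyEq
      (hq.mono fun q hq => by simp [norm_unitNormal hq])
  simpa using congr($(hν.hasFDerivAt.norm_sq.unique hunit) v)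

/-- Normal coordinates along the level sets of `ρ`: the pair `(q, t)` is sent to `q + tν(q)`,
together with the value of `ρ` at the foot point `q`. -/
def normalMap (ρ : E → ℝ) (x : E × ℝ) : E × ℝ := (x.1 + x.2 • unitNormal ρ x.1, ρ x.1)

/-- The derivative of `normalMap ρ` at `(q, 0)`. -/
def normalMapDeriv (hq : fderiv ℝ ρ q ≠ 0) : (E × ℝ) ≃L[ℝ] E × ℝ :=
  let A := fderiv ℝ ρ q
  let s := ‖A‖⁻¹ • (A.coprod (-ContinuousLinearMap.id ℝ ℝ))
  .equivOfInverse
    ((ContinuousLinearMap.id ℝ E).coprod (.toSpanSingleton ℝ (unitNormal ρ q)) |>.prod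
      (A.comp (.fst ℝ E ℝ)))
    ((ContinuousLinearMap.fst ℝ E ℝ - s.smulRight (unitNormal ρ q)).prod s)
    (fun x => by
      have hcancel : ‖A‖⁻¹ * (x.2 * ‖A‖) = x.2 := by
        rw [mul_comm, mul_inv_cancel_right₀ (norm_ne_zero_iff.2 hq)]
      ext <;> simp [A, s, fderiv_unitNormal_self hq, hcancel])
    (fun x => by
      have hcancel (t : ℝ) : ‖A‖⁻¹ * t * ‖A‖ = t := by
        rw [mul_right_comm, inv_mul_cancel₀ (norm_ne_zero_iff.2 hq), one_mul]
      ext <;> simp [A, s, fderiv_unitNormal_self hq, hcancel])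

theorem ContDiffHolderAt.normalMap (hε : ε ≤ 1) (hρ : ContDiffHolderAt ε (m + 1) ρ p)
    (hp : fderiv ℝ ρ p ≠ 0) : ContDiffHolderAt ε m (normalMap ρ) (p, 0) := by
  have hfst : ContDiffAt ℝ (m + 1 : ℕ) (Prod.fst : E × ℝ → E) (p, 0) := contDiffAt_fst
  have hsnd : ContDiffAt ℝ (m + 1 : ℕ) (Prod.snd : E × ℝ → ℝ) (p, 0) := contDiffAt_snd
  have hfst₁ := hfst.of_le (m := 1) (by simp)
  have hfst' := of_contDiffAt_succ hε hfst
  exact ((hfst'.add (bilin hε (.lsmul ℝ ℝ) (of_contDiffAt_succ hε hsnd)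
    ((hρ.unitNormal hε hp).comp hε hfst₁ hfst'))).prodMk hε
    ((hρ.of_succ hε).comp hε hfst₁ hfst'))

theorem fderiv_normalMap (hρ : DifferentiableAt ℝ ρ q) (hν : DifferentiableAt ℝ (unitNormal ρ) q)
    (hq : fderiv ℝ ρ q ≠ 0) : fderiv ℝ (normalMap ρ) (q, 0) = normalMapDeriv hq := by
  have hfst : HasFDerivAt (Prod.fst : E × ℝ → E) (.fst ℝ E ℝ) (q, 0) := hasFDerivAt_fst
  have hsnd : HasFDerivAt (Prod.snd : E × ℝ → ℝ) (.snd ℝ E ℝ) (q, 0) := hasFDerivAt_snd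
  have h := (hfst.add (hsnd.smul (hν.hasFDerivAt.comp (q, (0 : ℝ)) hfst))).prodMk
    (hρ.hasFDerivAt.comp (q, (0 : ℝ)) hfst)
  refine h.fderiv.trans ?_
  ext <;> simp [normalMapDeriv]

/-- Near `p`, the point `Q z` is the foot of the normal of `{ρ = 0}` through `z`, and `d z` is the
signed distance along that normal, negative on the side `ρ < 0`. -/
structure IsNormalProjection (ε : ℝ≥0) (m : ℕ) (ρ : E → ℝ) (p : E) (Q : E → E) (d : E → ℝ) :
    Prop where
  foot_holder : ContDiffHolderAt ε m Q p
  dist_holder : ContDiffHolderAt ε m d p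
  foot_self : Q p = p
  dist_self : d p = 0
  foot_add : ∀ᶠ z in 𝓝 p, Q z + d z • unitNormal ρ (Q z) = z
  apply_foot : ∀ᶠ z in 𝓝 p, ρ (Q z) = 0
  dist_eq : ∀ᶠ x : E × ℝ in 𝓝 (p, 0), ρ x.1 = 0 → d (x.1 + x.2 • unitNormal ρ x.1) = x.2

theorem exists_isNormalProjection (hε : ε ≤ 1) (hρ : ContDiffHolderAt ε (m + 2) ρ p)
    (hp : ρ p = 0) (hp' : fderiv ℝ ρ p ≠ 0) :
    ∃ Q d, IsNormalProjection ε (m + 1) ρ p Q d := by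
  have hG := hρ.normalMap hε hp'
  have hν := hρ.unitNormal hε hp'
  have hG₁ : ContDiffAt ℝ 1 (normalMap ρ) (p, 0) := hG.contDiffAt.of_le (by simp)
  have he := fderiv_normalMap (hρ.contDiffAt.differentiableAt (by simp))
    (hν.contDiffAt.differentiableAt (by simp)) hp'
  have hG' : HasFDerivAt (normalMap ρ) (normalMapDeriv hp' : E × ℝ →L[ℝ] E × ℝ) (p, 0) :=
    he ▸ (hG₁.differentiableAt one_ne_zero).hasFDerivAt
  have hGp : normalMap ρ (p, 0) = (p, 0) := by simp [normalMap, hp]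
  have hstrict := hG₁.hasStrictFDerivAt' hG' one_ne_zero
  set g := hG₁.localInverse hG' one_ne_zero
  have hleft : ∀ᶠ x in 𝓝 ((p, 0) : E × ℝ), g (normalMap ρ x) = x :=
    hstrict.eventually_left_inverse
  have hright : ∀ᶠ y in 𝓝 (normalMap ρ (p, 0)), normalMap ρ (g y) = y :=
    hstrict.eventually_right_inverse
  have hg := hG.localInverse hε he hleft.self_of_nhds (hG₁.to_localInverse hG' one_ne_zero) hright
  have hgp : g (p, 0) = (p, 0) := by simpa [hGp] using hleft.self_of_nhds
  rw [hGp] at hg hright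
  have hincl : ContDiff ℝ (m + 1 + 1 : ℕ) fun z : E => (z, (0 : ℝ)) := by fun_prop
  have hgz : ContDiffHolderAt ε (m + 1) (fun z => g (z, 0)) p :=
    ContDiffHolderAt.comp hε (f := fun z : E => (z, (0 : ℝ))) (hincl.contDiffAt.of_le (by simp)) hg
      (.of_contDiffAt_succ hε hincl.contDiffAt)
  have hright' : ∀ᶠ z in 𝓝 p, normalMap ρ (g (z, 0)) = (z, 0) :=
    hincl.continuous.continuousAt.eventually hright
  exact ⟨fun z => (g (z, 0)).1, fun z => (g (z, 0)).2,
    hgz.contDiffAt_comp hε contDiffAt_fst, hgz.contDiffAt_comp hε contDiffAt_snd,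
    by simp [hgp], by simp [hgp], hright'.mono fun z hz => congr($hz.1),
    hright'.mono fun z hz => congr($hz.2),
    hleft.mono fun x hx hx₀ => by rw [normalMap, hx₀] at hx; simp [hx]⟩

namespace IsNormalProjection

variable {Q : E → E} {d : E → ℝ}

theorem tendsto_foot (h : IsNormalProjection ε m ρ p Q d) : Tendsto Q (𝓝 p) (𝓝 p) := by
  simpa [ContinuousAt, h.foot_self] using h.foot_holder.continuousAt

theorem eventually_differentiableAt (h : IsNormalProjection ε (m + 1) ρ p Q d) :
    ∀ᶠ z in 𝓝 p, DifferentiableAt ℝ Q z ∧ DifferentiableAt ℝ d z :=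
  (ContDiffHolderAt.succ_iff.1 h.foot_holder).1.and (ContDiffHolderAt.succ_iff.1 h.dist_holder).1

theorem fderiv_comp_fderiv_foot (h : IsNormalProjection ε (m + 1) ρ p Q d)
    (hρ : ContDiffHolderAt ε (m + 2) ρ p) :
    ∀ᶠ z in 𝓝 p, (fderiv ℝ ρ (Q z)).comp (fderiv ℝ Q z) = 0 := by
  filter_upwards [h.eventually_differentiableAt, h.apply_foot.eventually_nhds,
    h.tendsto_foot.eventually (ContDiffHolderAt.succ_iff.1 hρ).1] with z hz hz₀ hρz
  exact (hρz.hasFDerivAt.comp z hz.1.hasFDerivAt).unique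
    ((hasFDerivAt_const (0 : ℝ) z).congr_of_eventuallyEq hz₀)

theorem fderiv_foot_add (h : IsNormalProjection ε (m + 1) ρ p Q d) (hε : ε ≤ 1)
    (hρ : ContDiffHolderAt ε (m + 2) ρ p) (hp : fderiv ℝ ρ p ≠ 0) :
    ∀ᶠ z in 𝓝 p, ∀ v, fderiv ℝ Q z v + (d z • fderiv ℝ (unitNormal ρ) (Q z) (fderiv ℝ Q z v) +
      fderiv ℝ d z v • unitNormal ρ (Q z)) = v := by
  filter_upwards [h.eventually_differentiableAt, h.foot_add.eventually_nhds,
    h.tendsto_foot.eventually (ContDiffHolderAt.succ_iff.1 (hρ.unitNormal hε hp)).1]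
    with z hz hz₀ hν v
  have := (hz.1.hasFDerivAt.add (hz.2.hasFDerivAt.smul
    (hν.hasFDerivAt.comp z hz.1.hasFDerivAt))).unique
    ((hasFDerivAt_id z).congr_of_eventuallyEq hz₀)
  exact congr($this v)

theorem fderiv_dist (h : IsNormalProjection ε (m + 1) ρ p Q d) (hε : ε ≤ 1)
    (hρ : ContDiffHolderAt ε (m + 2) ρ p) (hp : fderiv ℝ ρ p ≠ 0) :
    ∀ᶠ z in 𝓝 p, fderiv ℝ d z = ‖fderiv ℝ ρ (Q z)‖⁻¹ • fderiv ℝ ρ (Q z) := by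
  have hne : ∀ᶠ q in 𝓝 p, fderiv ℝ ρ q ≠ 0 :=
    (ContDiffHolderAt.succ_iff.1 hρ).2.continuousAt.eventually_ne hp
  filter_upwards [h.fderiv_foot_add hε hρ hp, h.fderiv_comp_fderiv_foot hρ,
    h.tendsto_foot.eventually ((inner_unitNormal_fderiv_unitNormal hε hρ hp).and hne)]
    with z hz hρQ ⟨hν, hne⟩
  ext v
  have hQ : ⟪unitNormal ρ (Q z), fderiv ℝ Q z v⟫_ℝ = 0 := by
    rw [inner_unitNormal, show fderiv ℝ ρ (Q z) (fderiv ℝ Q z v) = 0 from congr($hρQ v), mul_zero]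
  calc fderiv ℝ d z v
      = ⟪unitNormal ρ (Q z), fderiv ℝ Q z v + (d z • fderiv ℝ (unitNormal ρ) (Q z)
          (fderiv ℝ Q z v) + fderiv ℝ d z v • unitNormal ρ (Q z))⟫_ℝ := by
        simp only [inner_add_right, inner_smul_right, hQ, hν, real_inner_self_eq_norm_sq,
          norm_unitNormal hne]
        ring
    _ = ‖fderiv ℝ ρ (Q z)‖⁻¹ * fderiv ℝ ρ (Q z) v := by rw [hz, inner_unitNormal]

theorem fderiv_dist_self (h : IsNormalProjection ε (m + 1) ρ p Q d) (hε : ε ≤ 1)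
    (hρ : ContDiffHolderAt ε (m + 2) ρ p) (hp : fderiv ℝ ρ p ≠ 0) :
    fderiv ℝ d p = ‖fderiv ℝ ρ p‖⁻¹ • fderiv ℝ ρ p := by
  simpa [h.foot_self] using (h.fderiv_dist hε hρ hp).self_of_nhds

/-- The signed distance is as smooth as the defining function, although its construction by the
inverse function theorem loses one derivative: its gradient is the unit normal at the foot. -/
theorem contDiffHolderAt_dist (h : IsNormalProjection ε (m + 1) ρ p Q d) (hε : ε ≤ 1)
    (hρ : ContDiffHolderAt ε (m + 2) ρ p) (hp : fderiv ℝ ρ p ≠ 0) :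
    ContDiffHolderAt ε (m + 2) d p := by
  have hν : ContDiffHolderAt ε (m + 1) (unitNormal ρ) (Q p) :=
    h.foot_self.symm ▸ hρ.unitNormal hε hp
  have hνQ := hν.comp hε (h.foot_holder.contDiffAt.of_le (by simp)) h.foot_holder
  refine ContDiffHolderAt.succ_iff.2 ⟨h.eventually_differentiableAt.mono fun z hz => hz.2,
    (hνQ.contDiffAt_comp hε (innerSL ℝ).contDiff.contDiffAt).congr ?_⟩
  filter_upwards [h.fderiv_dist hε hρ hp] with z hz
  ext v
  exact (inner_unitNormal v).trans (by simp [hz])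

theorem fderiv_fderiv_dist_self (h : IsNormalProjection ε (m + 1) ρ p Q d) (hε : ε ≤ 1)
    (hρ : ContDiffHolderAt ε (m + 2) ρ p) (hp : fderiv ℝ ρ p ≠ 0) {u v : E}
    (hu : fderiv ℝ ρ p u = 0) (hv : fderiv ℝ ρ p v = 0) :
    fderiv ℝ (fderiv ℝ d) p u v = ‖fderiv ℝ ρ p‖⁻¹ * fderiv ℝ (fderiv ℝ ρ) p u v := by
  have hQu : fderiv ℝ Q p u = u := by
    simpa [h.dist_self, h.fderiv_dist_self hε hρ hp, hu] using
      (h.fderiv_foot_add hε hρ hp).self_of_nhds u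
  have hρ' : DifferentiableAt ℝ (fderiv ℝ ρ) (Q p) := h.foot_self.symm ▸
    (ContDiffHolderAt.succ_iff.1 (ContDiffHolderAt.succ_iff.1 hρ).2).1.self_of_nhds
  have hA := hρ'.hasFDerivAt.comp p h.eventually_differentiableAt.self_of_nhds.1.hasFDerivAt
  have hc : DifferentiableAt ℝ (fun z => ‖fderiv ℝ ρ (Q z)‖⁻¹) p := by
    have hgrad := ((toDual ℝ E).symm.contDiff (n := 1)).differentiable one_ne_zero _ |>.comp p
      hA.differentiableAt
    have hnorm := hgrad.norm ℝ (by simpa [h.foot_self])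
    simp only [Function.comp_apply, LinearIsometryEquiv.norm_map] at hnorm
    exact hnorm.inv (by simpa [h.foot_self])
  have hd := (hc.hasFDerivAt.smul hA).congr_of_eventuallyEq (h.fderiv_dist hε hρ hp)
  rw [hd.fderiv]
  simp [h.foot_self, hQu, hv]

theorem neg_iff (h : IsNormalProjection ε (m + 1) ρ p Q d) (hε : ε ≤ 1)
    (hρ : ContDiffHolderAt ε (m + 2) ρ p) (hp : fderiv ℝ ρ p ≠ 0) :
    ∀ᶠ z in 𝓝 p, ρ z < 0 ↔ d z < 0 := by
  set A := fderiv ℝ ρ p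
  have hA : 0 < ‖A‖ := norm_pos_iff.2 hp
  have hstrict := (hρ.contDiffAt.hasStrictFDerivAt (by simp)).isLittleO.bound
    (show 0 < ‖A‖ / 4 by positivity)
  have hν : ∀ᶠ q in 𝓝 p, ‖A‖ / 2 < A (unitNormal ρ q) := by
    refine (A.continuous.continuousAt.comp
      (hρ.unitNormal hε hp).continuousAt).eventually_const_lt ?_
    simp only [Function.comp_apply, A, fderiv_unitNormal_self hp]
    linarith
  have hne : ∀ᶠ q in 𝓝 p, fderiv ℝ ρ q ≠ 0 :=
    (ContDiffHolderAt.succ_iff.1 hρ).2.continuousAt.eventually_ne hp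
  have hpair : Tendsto (fun z => (z, Q z)) (𝓝 p) (𝓝 (p, p)) := tendsto_id.prodMk_nhds h.tendsto_foot
  filter_upwards [hpair.eventually hstrict, h.foot_add, h.apply_foot,
    h.tendsto_foot.eventually (hν.and hne)] with z hz hQ hρQ ⟨hAν, hne⟩
  have hzQ : z - Q z = d z • unitNormal ρ (Q z) := by rw [sub_eq_iff_eq_add', hQ]
  rw [hρQ, hzQ, map_smul, norm_smul, norm_unitNormal hne, smul_eq_mul, sub_zero, mul_one,
    Real.norm_eq_abs, Real.norm_eq_abs, abs_le] at hz
  rcases le_or_gt 0 (d z) with hd | hd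
  · rw [abs_of_nonneg hd] at hz
    exact iff_of_false (by nlinarith) hd.not_gt
  · rw [abs_of_neg hd] at hz
    exact iff_of_true (by nlinarith) hd

end IsNormalProjection

theorem exists_add_smul_unitNormal_eq {x y : E} (hρ : HasStrictFDerivAt ρ (fderiv ℝ ρ y) y)
    (hy : fderiv ℝ ρ y ≠ 0) (hmin : ∀ᶠ w in 𝓝 y, ρ w = ρ y → dist x y ≤ dist x w) :
    ∃ s : ℝ, |s| = dist x y ∧ y + s • unitNormal ρ y = x := by
  have hextr : IsLocalExtrOn (fun w => ‖w - x‖ ^ 2) {w | ρ w = ρ y} y :=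
    .inl <| eventually_nhdsWithin_iff.2 <| hmin.mono fun w hw hwy => by
      simpa only [dist_comm x, dist_eq_norm] using pow_le_pow_left₀ dist_nonneg (hw hwy) 2
  obtain ⟨a, b, hab, hlin⟩ := hextr.exists_multipliers_of_hasStrictFDerivAt_1d hρ
    ((hasStrictFDerivAt_norm_sq (y - x)).comp y ((hasStrictFDerivAt_id y).sub_const x))
  have hlin' (v : E) : a * fderiv ℝ ρ y v + b * (2 * ⟪y - x, v⟫_ℝ) = 0 := by
    simpa [inner_sub_left] using congr($hlin v)
  have hb : b ≠ 0 := by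
    rintro rfl
    refine hy (ContinuousLinearMap.ext fun v => ?_)
    have ha : a ≠ 0 := by rintro rfl; exact hab rfl
    simpa [ha] using hlin' v
  obtain ⟨s, hs⟩ : ∃ s : ℝ, s • unitNormal ρ y = x - y := by
    refine ⟨a / (2 * b) * ‖fderiv ℝ ρ y‖, ext_inner_right ℝ fun v => ?_⟩
    rw [real_inner_smul_left, inner_unitNormal, mul_assoc,
      mul_inv_cancel_left₀ (norm_ne_zero_iff.2 hy), ← neg_sub, inner_neg_left]
    field_simp
    linarith [hlin' v]
  refine ⟨s, ?_, by rw [hs, add_sub_cancel]⟩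
  rw [dist_eq_norm, ← hs, norm_smul, norm_unitNormal hy, Real.norm_eq_abs, mul_one]

end Complete

theorem mem_frontier_iff_eq_zero {ρ : E → ℝ} {p : E} {Ω : Set E} (hΩ : IsOpen Ω)
    (hρ : ContDiffAt ℝ 1 ρ p) (hp : fderiv ℝ ρ p ≠ 0) (hΩρ : ∀ᶠ z in 𝓝 p, z ∈ Ω ↔ ρ z < 0) :
    ∀ᶠ y in 𝓝 p, y ∈ frontier Ω ↔ ρ y = 0 := by
  filter_upwards [hΩρ.eventually_nhds, hρ.eventually (by simp),
    (hρ.fderiv_right (m := 0) le_rfl).continuousAt.eventually_ne hp] with y hy hρy hne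
  rw [hΩ.frontier_eq, Set.mem_sdiff, hy.self_of_nhds, not_lt, mem_closure_iff_frequently]
  refine ⟨fun ⟨hcl, hge⟩ => hge.antisymm' ?_, fun h0 => ⟨?_, h0.ge⟩⟩
  · refine le_of_tendsto_of_frequently hρy.continuousAt ?_
    exact (hcl.and_eventually hy).mono fun w hw => (hw.2.1 hw.1).le
  · by_contra hnot
    refine hne (IsLocalMin.fderiv_eq_zero ?_)
    filter_upwards [not_frequently.1 hnot, hy] with w hw hwΩ
    rw [h0]
    exact not_lt.1 fun hlt => hw (hwΩ.2 hlt)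

theorem IsNormalProjection.infDist_frontier [ProperSpace E] {ε : ℝ≥0} {m : ℕ} {ρ d : E → ℝ}
    {Q : E → E} {p : E} {Ω : Set E} (h : IsNormalProjection ε (m + 1) ρ p Q d) (hε : ε ≤ 1)
    (hρ : ContDiffHolderAt ε (m + 2) ρ p) (hp : fderiv ℝ ρ p ≠ 0) (hΩ : IsOpen Ω)
    (hpΩ : p ∈ frontier Ω) (hΩρ : ∀ᶠ z in 𝓝 p, z ∈ Ω ↔ ρ z < 0) :
    ∀ᶠ x in 𝓝 p, x ∈ Ω → infDist x (frontier Ω) = -d x := by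
  have hρ₁ : ContDiffAt ℝ 1 ρ p := hρ.contDiffAt.of_le (by norm_cast; omega)
  have hfoot : ∀ᶠ y in 𝓝 p, HasStrictFDerivAt ρ (fderiv ℝ ρ y) y ∧ fderiv ℝ ρ y ≠ 0 ∧
      ∀ᶠ w in 𝓝 y, w ∈ frontier Ω ↔ ρ w = 0 := by
    filter_upwards [(hρ₁.eventually (by simp)),
      (hρ₁.fderiv_right (m := 0) le_rfl).continuousAt.eventually_ne hp,
      (mem_frontier_iff_eq_zero hΩ hρ₁ hp hΩρ).eventually_nhds] with y hρy hne hy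
    exact ⟨hρy.hasStrictFDerivAt one_ne_zero, hne, hy⟩
  obtain ⟨r, hr, hball⟩ := Metric.eventually_nhds_iff_ball.1
    ((hfoot.prod_inl_nhds (0 : ℝ)).and h.dist_eq)
  filter_upwards [ball_mem_nhds p (half_pos hr), h.neg_iff hε hρ hp, hΩρ]
    with x hx hneg hxΩ hxmem
  obtain ⟨y, hyΩ, hxy⟩ := isClosed_frontier.exists_infDist_eq_dist ⟨p, hpΩ⟩ x
  have hxp : dist x p < r / 2 := hx
  have hxyp : dist x y ≤ dist x p := hxy ▸ infDist_le_dist_of_mem hpΩ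
  have hyp : dist y p < r := by linarith [dist_triangle_left y p x]
  obtain ⟨⟨hstrict, hne, hfr⟩, -⟩ := hball (y, 0) (by simpa [Prod.dist_eq] using hyp)
  have hy0 := hfr.self_of_nhds.1 hyΩ
  obtain ⟨s, hs, hsx⟩ := exists_add_smul_unitNormal_eq (x := x) hstrict hne <| hfr.mono
    fun w hw hwy => hxy ▸ infDist_le_dist_of_mem (hw.2 (hwy.trans hy0))
  have hys : (y, s) ∈ ball (p, (0 : ℝ)) r :=
    mem_ball.2 (max_lt hyp (by rw [dist_zero_right, Real.norm_eq_abs, hs]; linarith))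
  have hd : d x = s := by simpa only [hsx] using (hball _ hys).2 hy0
  rw [hxy, ← hs, ← hd, abs_of_neg (hneg.1 (hxΩ.1 hxmem))]

end SignedDistance

section RealForms

variable {E : Type*} [NormedAddCommGroup E] [NormedSpace ℝ E]

theorem abs_apply_apply_le {B : E →L[ℝ] E →L[ℝ] ℝ} {X Y : E} {K a b : ℝ} (hB : ‖B‖ ≤ K)
    (hX : ‖X‖ ≤ a) (hY : ‖Y‖ ≤ b) : |B X Y| ≤ K * a * b := by
  have : 0 ≤ a := (norm_nonneg X).trans hX
  have : 0 ≤ K := (norm_nonneg B).trans hB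
  calc ‖B X Y‖ ≤ ‖B‖ * ‖X‖ * ‖Y‖ := B.le_opNorm₂ X Y
    _ ≤ K * a * b := by gcongr

theorem abs_apply_apply_apply_le {T : E →L[ℝ] E →L[ℝ] E →L[ℝ] ℝ} {X Y Z : E} {K a b c : ℝ}
    (hT : ‖T‖ ≤ K) (hX : ‖X‖ ≤ a) (hY : ‖Y‖ ≤ b) (hZ : ‖Z‖ ≤ c) : |T X Y Z| ≤ K * a * b * c :=
  abs_apply_apply_le ((T.le_opNorm X).trans
    (mul_le_mul hT hX (norm_nonneg X) ((norm_nonneg T).trans hT))) hY hZ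

end RealForms

section ComplexForms

open Complex ComplexConjugate

variable {E : Type*} [NormedAddCommGroup E] [NormedSpace ℂ E]

theorem norm_I_smul (v : E) : ‖I • v‖ = ‖v‖ := by rw [norm_smul, norm_I, one_mul]

variable [NormedSpace ℝ E]

/-- The Levi form `(B(X, X) + B(iX, iX))/4` of a real bilinear form `B`. -/
def leviPart (B : E →L[ℝ] E →L[ℝ] ℝ) (X : E) : ℝ := (B X X + B (I • X) (I • X)) / 4

/-- The complex bilinear part `γ` in the decomposition
`B(λX, μY) = Re(γ(X, Y)λμ + h(X, Y) * conj λ * μ)` of a real bilinear form `B`. -/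
def bilinPart (B : E →L[ℝ] E →L[ℝ] ℝ) (X Y : E) : ℂ :=
  ⟨(B X Y - B (I • X) (I • Y)) / 2, -(B (I • X) Y + B X (I • Y)) / 2⟩

/-- The sesquilinear part `h` in the decomposition
`B(λX, μY) = Re(γ(X, Y)λμ + h(X, Y) * conj λ * μ)` of a real bilinear form `B`. -/
def sesqPart (B : E →L[ℝ] E →L[ℝ] ℝ) (X Y : E) : ℂ :=
  ⟨(B X Y + B (I • X) (I • Y)) / 2, (B (I • X) Y - B X (I • Y)) / 2⟩

variable {B : E →L[ℝ] E →L[ℝ] ℝ} {X Y : E}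

theorem norm_bilinPart_le {K : ℝ} (hB : ‖B‖ ≤ K) : ‖bilinPart B X Y‖ ≤ 2 * K * ‖X‖ * ‖Y‖ := by
  have h₁ := abs_le.1 (abs_apply_apply_le hB le_rfl le_rfl : |B X Y| ≤ _)
  have h₂ := abs_le.1 (abs_apply_apply_le hB (norm_I_smul X).le (norm_I_smul Y).le)
  have h₃ := abs_le.1 (abs_apply_apply_le hB (norm_I_smul X).le le_rfl : |B _ Y| ≤ _)
  have h₄ := abs_le.1 (abs_apply_apply_le hB le_rfl (norm_I_smul Y).le : |B X _| ≤ _)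
  have hre : |(bilinPart B X Y).re| ≤ K * ‖X‖ * ‖Y‖ := by
    rw [abs_le, bilinPart]
    constructor <;> linarith
  have him : |(bilinPart B X Y).im| ≤ K * ‖X‖ * ‖Y‖ := by
    rw [abs_le, bilinPart]
    constructor <;> linarith
  linarith [norm_le_abs_re_add_abs_im (bilinPart B X Y)]

theorem norm_sesqPart_le {K : ℝ} (hB : ‖B‖ ≤ K) : ‖sesqPart B X Y‖ ≤ 2 * K * ‖X‖ * ‖Y‖ := by
  have h₁ := abs_le.1 (abs_apply_apply_le hB le_rfl le_rfl : |B X Y| ≤ _)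
  have h₂ := abs_le.1 (abs_apply_apply_le hB (norm_I_smul X).le (norm_I_smul Y).le)
  have h₃ := abs_le.1 (abs_apply_apply_le hB (norm_I_smul X).le le_rfl : |B _ Y| ≤ _)
  have h₄ := abs_le.1 (abs_apply_apply_le hB le_rfl (norm_I_smul Y).le : |B X _| ≤ _)
  have hre : |(sesqPart B X Y).re| ≤ K * ‖X‖ * ‖Y‖ := by
    rw [abs_le, sesqPart]
    constructor <;> linarith
  have him : |(sesqPart B X Y).im| ≤ K * ‖X‖ * ‖Y‖ := by
    rw [abs_le, sesqPart]
    constructor <;> linarith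
  linarith [norm_le_abs_re_add_abs_im (sesqPart B X Y)]

theorem sesqPart_self (hB : ∀ u v, B u v = B v u) : sesqPart B X X = (2 * leviPart B X : ℝ) := by
  apply Complex.ext
  · simp only [sesqPart, leviPart, ofReal_re]
    ring
  · simp [sesqPart, hB (I • X) X]

variable [IsScalarTower ℝ ℂ E]

theorem complex_smul_eq (w : ℂ) (v : E) : w • v = w.re • v + w.im • I • v := by
  rw [← algebraMap_smul ℂ w.re, ← algebraMap_smul ℂ w.im, smul_smul, ← add_smul]
  exact congrArg (· • v) (re_add_im w).symm

/-- The complex linear part `∂A = (A - iA(i·))/2` of a real functional `A`. For `A = dr` it is the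
`(1,0)`-differential `∂r`. -/
def delForm (A : E →L[ℝ] ℝ) : E →L[ℂ] ℂ := (2⁻¹ : ℂ) • StrongDual.extendRCLike A

theorem delForm_apply (A : E →L[ℝ] ℝ) (v : E) : delForm A v = (A v - I * A (I • v)) / 2 := by
  simp only [delForm, FunLike.coe_smul, Pi.smul_apply, StrongDual.extendRCLike_apply,
    coe_algebraMap, RCLike.I_to_complex, smul_eq_mul]
  ring

theorem two_mul_re_delForm (A : E →L[ℝ] ℝ) (v : E) : 2 * (delForm A v).re = A v := by
  simp [delForm_apply, mul_div_cancel₀]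

theorem norm_delForm_apply_sq (A : E →L[ℝ] ℝ) (v : E) :
    ‖delForm A v‖ ^ 2 = (A v ^ 2 + A (I • v) ^ 2) / 4 := by
  rw [← normSq_eq_norm_sq, normSq_apply]
  simp [delForm_apply]
  ring

theorem delForm_eq_zero_iff {A : E →L[ℝ] ℝ} {v : E} :
    delForm A v = 0 ↔ A v = 0 ∧ A (I • v) = 0 := by
  rw [← norm_eq_zero, ← sq_eq_zero_iff, norm_delForm_apply_sq, div_eq_zero_iff,
    or_iff_left four_ne_zero, add_eq_zero_iff_of_nonneg (sq_nonneg _) (sq_nonneg _),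
    sq_eq_zero_iff, sq_eq_zero_iff]

theorem norm_delForm_apply_le (A : E →L[ℝ] ℝ) (v : E) : ‖delForm A v‖ ≤ ‖A‖ * ‖v‖ := by
  rw [delForm, FunLike.coe_smul, Pi.smul_apply, norm_smul, norm_inv, RCLike.norm_ofNat]
  have := StrongDual.norm_extendRCLike_bound (𝕜 := ℂ) A v
  linarith [norm_nonneg (StrongDual.extendRCLike (𝕜 := ℂ) A v)]

variable (B X Y)

theorem apply_smul_smul (w ζ : ℂ) :
    B (w • X) (ζ • Y) = (bilinPart B X Y * w * ζ + sesqPart B X Y * conj w * ζ).re := by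
  simp only [complex_smul_eq w, complex_smul_eq ζ, map_add, map_smul, FunLike.coe_add,
    FunLike.coe_smul, Pi.add_apply, Pi.smul_apply, smul_eq_mul, bilinPart, sesqPart, add_re, mul_re,
    mul_im, conj_re, conj_im]
  ring

theorem apply_smul_smul_self (w : ℂ) :
    B (w • X) (w • X) = (bilinPart B X X * w ^ 2).re + 2 * (‖w‖ ^ 2 * leviPart B X) := by
  rw [← normSq_eq_norm_sq]
  simp only [complex_smul_eq w, map_add, map_smul, FunLike.coe_add, FunLike.coe_smul, Pi.add_apply,
    Pi.smul_apply, smul_eq_mul, bilinPart, leviPart, normSq_apply, mul_re, pow_two, mul_im]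
  ring

theorem leviPart_smul (t : ℝ) : leviPart B (t • X) = t ^ 2 * leviPart B X := by
  have : I • t • X = t • I • X := by
    rw [← algebraMap_smul ℂ t, ← algebraMap_smul ℂ t, smul_comm]
  simp only [leviPart, this, map_smul, FunLike.coe_smul, Pi.smul_apply, smul_eq_mul]
  ring

theorem sesqPart_add_smul (Z : E) (w ζ : ℂ) :
    sesqPart B X (w • Y + ζ • Z) = w * sesqPart B X Y + ζ * sesqPart B X Z := by
  have hB (U V : E) (w : ℂ) : B U (w • V) = w.re * B U V + w.im * B U (I • V) := by
    rw [complex_smul_eq, map_add, map_smul, map_smul, smul_eq_mul, smul_eq_mul]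
  apply Complex.ext <;>
  · simp only [smul_add, smul_smul, map_add, hB _ _ w, hB _ _ ζ, hB _ _ (I * w), hB _ _ (I * ζ),
      sesqPart, add_re, add_im, mul_re, mul_im, I_re, I_im]
    ring

end ComplexForms

section RealForms

theorem norm_add_le_of_quadratic_cubic {E : Type*} [SeminormedAddGroup E] {w₂ w₃ : E} {a D : ℝ}
    (ha₀ : 0 ≤ a) (ha : a ≤ 1) (hD : 0 ≤ D) (hw₂ : ‖w₂‖ ≤ D * a ^ 2) (hw₃ : ‖w₃‖ ≤ D * a ^ 3) :
    ‖w₂ + w₃‖ ≤ 2 * D * a ^ 2 := by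
  have := mul_le_mul_of_nonneg_left (pow_le_pow_of_le_one ha₀ ha (by simp : 2 ≤ 3)) hD
  linarith [norm_add_le w₂ w₃]

variable {E : Type*} [NormedAddCommGroup E] [NormedSpace ℝ E]

theorem abs_apply_add_sub_le {B : E →L[ℝ] E →L[ℝ] ℝ} {u w : E} {K a b : ℝ} (hB : ‖B‖ ≤ K)
    (hu : ‖u‖ ≤ a) (hw : ‖w‖ ≤ b) :
    |B (u + w) (u + w) - B u u| ≤ K * (2 * a * b + b ^ 2) := by
  have h₁ := abs_le.1 (abs_apply_apply_le hB hu hw)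
  have h₂ := abs_le.1 (abs_apply_apply_le hB hw hu)
  have h₃ := abs_le.1 (abs_apply_apply_le hB hw hw)
  simp only [map_add, FunLike.coe_add, Pi.add_apply]
  rw [abs_le]
  constructor <;> linarith

theorem abs_apply_add_add_sub_le {B : E →L[ℝ] E →L[ℝ] ℝ} {u w₂ w₃ : E} {K a D : ℝ}
    (hsymm : ∀ u v, B u v = B v u) (hB : ‖B‖ ≤ K) (ha : a ≤ 1) (hD : 0 ≤ D) (hu : ‖u‖ ≤ a)
    (hw₂ : ‖w₂‖ ≤ D * a ^ 2) (hw₃ : ‖w₃‖ ≤ D * a ^ 3) :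
    |B (u + (w₂ + w₃)) (u + (w₂ + w₃)) - (B u u + 2 * B u w₂)| ≤
      2 * K * D * (1 + 2 * D) * a ^ 4 := by
  have ha₀ : 0 ≤ a := (norm_nonneg u).trans hu
  have hw := norm_add_le_of_quadratic_cubic ha₀ ha hD hw₂ hw₃
  have h₁ := abs_le.1 (abs_apply_apply_le hB hu hw₃)
  have h₂ := abs_le.1 (abs_apply_apply_le hB hw hw)
  have hexp : B (u + (w₂ + w₃)) (u + (w₂ + w₃)) - (B u u + 2 * B u w₂) =
      2 * B u w₃ + B (w₂ + w₃) (w₂ + w₃) := by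
    rw [map_add B u, map_add (B u + B (w₂ + w₃)), FunLike.coe_add, Pi.add_apply, Pi.add_apply,
      hsymm (w₂ + w₃) u, map_add (B u)]
    ring
  rw [hexp, abs_le]
  constructor <;> linarith

theorem abs_apply_add_pow_three_sub_le {T : E →L[ℝ] E →L[ℝ] E →L[ℝ] ℝ} {u w : E} {K a D : ℝ}
    (hT : ‖T‖ ≤ K) (ha : a ≤ 1) (hD : 0 ≤ D) (hu : ‖u‖ ≤ a) (hw : ‖w‖ ≤ D * a ^ 2) :
    |T (u + w) (u + w) (u + w) - T u u u| ≤ 3 * K * D * (1 + D) ^ 2 * a ^ 4 := by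
  have ha₀ : 0 ≤ a := (norm_nonneg u).trans hu
  have hv : ‖u + w‖ ≤ (1 + D) * a := by
    have := mul_le_mul_of_nonneg_left (mul_le_of_le_one_left ha₀ ha) hD
    linarith [norm_add_le u w]
  have hu' : ‖u‖ ≤ (1 + D) * a := hu.trans (le_mul_of_one_le_left ha₀ (by linarith))
  have h₁ := abs_le.1 (abs_apply_apply_apply_le hT hw hv hv)
  have h₂ := abs_le.1 (abs_apply_apply_apply_le hT hu' hw hv)
  have h₃ := abs_le.1 (abs_apply_apply_apply_le hT hu' hu' hw)
  have hexp : T (u + w) (u + w) (u + w) - T u u u =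
      T w (u + w) (u + w) + T u w (u + w) + T u u w := by
    simp only [map_add, FunLike.coe_add, Pi.add_apply]
    ring
  rw [hexp, abs_le]
  constructor <;> linarith

end RealForms

section Osculation

open Complex ComplexConjugate

variable {E : Type*} [NormedAddCommGroup E] [NormedSpace ℂ E]

theorem norm_pow_smul_le {X Y : E} {D : ℝ} {j : ℕ} (w : ℂ) (hY : ‖Y‖ ≤ D * ‖X‖ ^ j) :
    ‖w ^ j • Y‖ ≤ D * (‖w‖ * ‖X‖) ^ j := by
  rw [norm_smul, norm_pow, mul_pow, mul_left_comm]
  exact mul_le_mul_of_nonneg_left hY (by positivity)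

theorem norm_cubic_le {X Y Z : E} {D : ℝ} {w : ℂ} (hD : 0 ≤ D) (hY : ‖Y‖ ≤ D * ‖X‖ ^ 2)
    (hZ : ‖Z‖ ≤ D * ‖X‖ ^ 3) (hw : ‖w‖ * ‖X‖ ≤ 1) :
    ‖w • X + (w ^ 2 • Y + w ^ 3 • Z)‖ ≤ (1 + 2 * D) * (‖w‖ * ‖X‖) := by
  have ha₀ : 0 ≤ ‖w‖ * ‖X‖ := by positivity
  have h₂ : (‖w‖ * ‖X‖) ^ 2 ≤ ‖w‖ * ‖X‖ := pow_le_of_le_one ha₀ hw two_ne_zero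
  have h₃ : (‖w‖ * ‖X‖) ^ 3 ≤ ‖w‖ * ‖X‖ := pow_le_of_le_one ha₀ hw three_ne_zero
  calc ‖w • X + (w ^ 2 • Y + w ^ 3 • Z)‖
      ≤ ‖w‖ * ‖X‖ + (D * (‖w‖ * ‖X‖) ^ 2 + D * (‖w‖ * ‖X‖) ^ 3) :=
        norm_add_le_of_le (norm_smul w X).le
          (norm_add_le_of_le (norm_pow_smul_le w hY) (norm_pow_smul_le w hZ))
    _ ≤ ‖w‖ * ‖X‖ + (D * (‖w‖ * ‖X‖) + D * (‖w‖ * ‖X‖)) := by gcongr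
    _ = (1 + 2 * D) * (‖w‖ * ‖X‖) := by ring

variable [NormedSpace ℝ E] [IsScalarTower ℝ ℂ E]

theorem exists_apply_smul_pow_three_eq {T : E →L[ℝ] E →L[ℝ] E →L[ℝ] ℝ} {K : ℝ} (hT : ‖T‖ ≤ K)
    (X : E) : ∃ α β : ℂ, ‖α‖ ≤ 3 * K * ‖X‖ ^ 3 ∧ ‖β‖ ≤ 3 * K * ‖X‖ ^ 3 ∧
      ∀ w : ℂ, T (w • X) (w • X) (w • X) = (α * w ^ 3 + β * (‖w‖ ^ 2 * w)).re := by
  set c₀ := T X X X with hc₀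
  set c₁ := T X X (I • X) + T X (I • X) X + T (I • X) X X with hc₁
  set c₂ := T X (I • X) (I • X) + T (I • X) X (I • X) + T (I • X) (I • X) X with hc₂
  set c₃ := T (I • X) (I • X) (I • X) with hc₃
  have hT' {u v w : E} (hu : ‖u‖ = ‖X‖) (hv : ‖v‖ = ‖X‖) (hw : ‖w‖ = ‖X‖) :
      |T u v w| ≤ K * ‖X‖ ^ 3 :=
    (abs_apply_apply_apply_le hT hu.le hv.le hw.le).trans_eq (by ring)
  have hI := norm_I_smul X
  have h₀ := abs_le.1 (hT' rfl rfl rfl)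
  have h₃ := abs_le.1 (hT' hI hI hI)
  have h₁ : |c₁| ≤ 3 * (K * ‖X‖ ^ 3) := (abs_add_three _ _ _).trans (by
    linarith [hT' rfl rfl hI, hT' rfl hI rfl, hT' hI rfl rfl])
  have h₂ : |c₂| ≤ 3 * (K * ‖X‖ ^ 3) := (abs_add_three _ _ _).trans (by
    linarith [hT' rfl hI hI, hT' hI rfl hI, hT' hI hI rfl])
  rw [abs_le] at h₁ h₂
  refine ⟨⟨(c₀ - c₂) / 4, (c₃ - c₁) / 4⟩, ⟨(3 * c₀ + c₂) / 4, -(3 * c₃ + c₁) / 4⟩, ?_, ?_,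
    fun w => ?_⟩
  · refine (norm_le_abs_re_add_abs_im _).trans ?_
    have hre : |(c₀ - c₂) / 4| ≤ K * ‖X‖ ^ 3 := by rw [abs_le]; constructor <;> linarith
    have him : |(c₃ - c₁) / 4| ≤ K * ‖X‖ ^ 3 := by rw [abs_le]; constructor <;> linarith
    linarith [(abs_nonneg ((c₀ - c₂) / 4)).trans hre]
  · refine (norm_le_abs_re_add_abs_im _).trans ?_
    have hre : |(3 * c₀ + c₂) / 4| ≤ 3 / 2 * (K * ‖X‖ ^ 3) := by
      rw [abs_le]; constructor <;> linarith
    have him : |-(3 * c₃ + c₁) / 4| ≤ 3 / 2 * (K * ‖X‖ ^ 3) := by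
      rw [abs_le]; constructor <;> linarith
    linarith
  · rw [complex_smul_eq w X, ← ofReal_pow, ← normSq_eq_norm_sq]
    simp only [map_add, map_smul, FunLike.coe_add, FunLike.coe_smul, Pi.add_apply, Pi.smul_apply,
      smul_eq_mul, hc₀, hc₁, hc₂, hc₃, normSq_apply, add_re, mul_re, mul_im, pow_succ, pow_zero,
      one_mul, ofReal_re, ofReal_im, zero_mul, sub_zero, add_zero]
    ring

/-- The quadratic coefficient `Y = -γ(X, X)ν/4` makes the disc follow the level set to second
order. -/
theorem exists_quadratic_osculation (K : ℝ) : ∃ D > 0, ∀ (A : E →L[ℝ] ℝ)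
    (B : E →L[ℝ] E →L[ℝ] ℝ) (ν X : E), ‖B‖ ≤ K → ‖ν‖ ≤ K → delForm A ν = 1 →
    ∃ Y : E, ‖Y‖ ≤ D * ‖X‖ ^ 2 ∧ ∀ w : ℂ, ‖w‖ * ‖X‖ ≤ 1 →
      A (w • X + w ^ 2 • Y) + 2⁻¹ * B (w • X + w ^ 2 • Y) (w • X + w ^ 2 • Y) ≤
        2 * (w * delForm A X).re + ‖w‖ ^ 2 * leviPart B X + D * (‖w‖ * ‖X‖) ^ 3 := by
  refine ⟨(1 + |K|) * (1 + K ^ 2) * (3 + K ^ 2), by positivity, fun A B ν X hB hν hAν => ?_⟩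
  have hK : 0 ≤ K := (norm_nonneg ν).trans hν
  rw [abs_of_nonneg hK]
  set Y := (-bilinPart B X X / 4) • ν with hYdef
  have hY : ‖Y‖ ≤ (1 + K ^ 2) * ‖X‖ ^ 2 := by
    rw [hYdef, norm_smul, norm_div, norm_neg, RCLike.norm_ofNat]
    have := mul_le_mul (norm_bilinPart_le hB : ‖bilinPart B X X‖ ≤ _) hν (norm_nonneg ν)
      (by positivity)
    nlinarith [sq_nonneg ‖X‖, mul_nonneg (sq_nonneg ‖X‖) (sq_nonneg K)]
  refine ⟨Y, hY.trans ?_, fun w hw => ?_⟩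
  · refine mul_le_mul_of_nonneg_right ?_ (sq_nonneg ‖X‖)
    nlinarith [mul_nonneg hK (sq_nonneg K), sq_nonneg K, mul_nonneg hK (sq_nonneg (K ^ 2))]
  set a := ‖w‖ * ‖X‖ with ha
  have ha₀ : 0 ≤ a := by positivity
  have hA : A (w • X + w ^ 2 • Y) = 2 * (w * delForm A X).re + 2 * (w ^ 2 * delForm A Y).re := by
    rw [← two_mul_re_delForm, map_add, map_smul, map_smul, add_re, smul_eq_mul, smul_eq_mul,
      mul_add]
  have hcancel : 2 * (w ^ 2 * delForm A Y).re + 2⁻¹ * (bilinPart B X X * w ^ 2).re = 0 := by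
    have : 2 * (w ^ 2 * delForm A Y) + 2⁻¹ * (bilinPart B X X * w ^ 2) = 0 := by
      rw [hYdef, map_smul, hAν, smul_eq_mul]
      ring
    simpa using congrArg re this
  have hBu := apply_smul_smul_self B X w
  have herr := (abs_le.1 (abs_apply_add_sub_le hB (norm_smul w X).le (norm_pow_smul_le w hY))).2
  have ha₄ : K * (1 + K ^ 2) ^ 2 * a ^ 4 ≤ K * (1 + K ^ 2) ^ 2 * a ^ 3 :=
    mul_le_mul_of_nonneg_left (pow_le_pow_of_le_one ha₀ hw (by simp)) (by positivity)
  have : 0 ≤ (1 + K ^ 2) * (3 + K ^ 2) * a ^ 3 := by positivity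
  have : 0 ≤ K * ((1 + K ^ 2) * (3 + K ^ 2) * a ^ 3) := by positivity
  rw [← ha] at herr
  linarith

theorem exists_norm_le_mul_eq {z : ℂ} {s t : ℝ} (hs : 0 ≤ s) (ht : 0 ≤ t) (hz : ‖z‖ ≤ t * s) :
    ∃ b : ℂ, ‖b‖ ≤ t ∧ b * s = z := by
  refine ⟨z / s, ?_, div_mul_cancel_of_imp fun h => ?_⟩
  · rw [norm_div, Complex.norm_of_nonneg hs]
    exact div_le_of_le_mul₀ hs ht hz
  · rw [ofReal_eq_zero.1 h, mul_zero] at hz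
    exact norm_le_zero_iff.1 hz

theorem norm_neg_div_six_add_mul_le {β y h : ℂ} {K x : ℝ} (hβ : ‖β‖ ≤ 3 * K * x ^ 3)
    (hy : ‖y‖ ≤ K * x ^ 2) (hh : ‖h‖ ≤ 2 * K ^ 2 * x) :
    ‖-(β / 6 + y * h)‖ ≤ 2 * (K + K ^ 3) * x ^ 3 := by
  have hx : 0 ≤ K * x ^ 3 := by linarith [norm_nonneg β]
  have hyh := mul_le_mul hy hh (norm_nonneg h) ((norm_nonneg y).trans hy)
  rw [norm_neg]
  calc ‖β / 6 + y * h‖ ≤ ‖β‖ / 6 + ‖y‖ * ‖h‖ :=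
        (norm_add_le _ _).trans_eq (by rw [norm_mul, norm_div, RCLike.norm_ofNat])
    _ ≤ 2 * (K + K ^ 3) * x ^ 3 := by linarith

/-- Among the `Y` with `∂A(Y) = -γ(X, X)/4`, positivity of the Levi form provides one for which the
coefficient of `|λ|²λ` almost vanishes. -/
theorem exists_quadratic_coeff {c : ℝ} (hc : 0 < c) (K : ℝ) : ∃ D > 0, ∀ (A : E →L[ℝ] ℝ)
    (B : E →L[ℝ] E →L[ℝ] ℝ) (ν X : E) (β : ℂ), (∀ u v, B u v = B v u) → ‖A‖ ≤ K → ‖B‖ ≤ K →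
    ‖ν‖ ≤ K → delForm A ν = 1 → c * ‖X‖ ^ 2 ≤ leviPart B X → ‖β‖ ≤ 3 * K * ‖X‖ ^ 3 →
    ∃ Y : E, ‖Y‖ ≤ D * ‖X‖ ^ 2 ∧ 2 * delForm A Y + bilinPart B X X / 2 = 0 ∧
      ‖sesqPart B X Y + β / 6‖ ≤ D * ‖X‖ ^ 2 * ‖delForm A X‖ := by
  set M := (|K| + |K| ^ 3) / c with hM
  refine ⟨1 + (|K| + M * |K|) * |K| + M + 2 * |K| ^ 2 * M, by positivity,
    fun A B ν X β hsymm hA hB hν hAν hX hβ => ?_⟩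
  have hK : 0 ≤ K := (norm_nonneg ν).trans hν
  rw [abs_of_nonneg hK] at hM ⊢
  have : 0 ≤ M := by positivity
  set N := delForm A X
  have hNle : ‖N‖ ≤ K * ‖X‖ := (norm_delForm_apply_le A X).trans (by gcongr)
  set y := -bilinPart B X X / 4 with hy
  have hyle : ‖y‖ ≤ K * ‖X‖ ^ 2 := by
    rw [hy, norm_div, norm_neg, RCLike.norm_ofNat]
    have : 0 ≤ K * ‖X‖ ^ 2 := by positivity
    linarith [(norm_bilinPart_le hB : ‖bilinPart B X X‖ ≤ _)]
  have hhν : ‖sesqPart B X ν‖ ≤ 2 * K ^ 2 * ‖X‖ :=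
    (norm_sesqPart_le hB).trans ((mul_le_mul_of_nonneg_left hν (by positivity)).trans_eq (by ring))
  have hnum : ‖-(β / 6 + y * sesqPart B X ν)‖ ≤ M * ‖X‖ * (2 * leviPart B X) := calc
    _ ≤ 2 * (K + K ^ 3) * ‖X‖ ^ 3 := norm_neg_div_six_add_mul_le hβ hyle hhν
    _ = M * ‖X‖ * (2 * (c * ‖X‖ ^ 2)) := by
      rw [hM]
      field_simp
    _ ≤ M * ‖X‖ * (2 * leviPart B X) := by gcongr
  have hL : 0 ≤ leviPart B X := le_trans (by positivity) hX
  obtain ⟨b, hb, hbmul⟩ := exists_norm_le_mul_eq (by positivity) (by positivity) hnum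
  refine ⟨(y - b * N) • ν + b • X, ?_, ?_, ?_⟩
  · have : 0 ≤ ‖X‖ ^ 2 + 2 * K ^ 2 * M * ‖X‖ ^ 2 := by positivity
    calc ‖(y - b * N) • ν + b • X‖ ≤ (‖y‖ + ‖b‖ * ‖N‖) * ‖ν‖ + ‖b‖ * ‖X‖ := by
          refine (norm_add_le _ _).trans ?_
          rw [norm_smul, norm_smul, ← norm_mul b]
          gcongr
          exact norm_sub_le _ _
      _ ≤ (K * ‖X‖ ^ 2 + M * ‖X‖ * (K * ‖X‖)) * K + M * ‖X‖ * ‖X‖ := by gcongr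
      _ ≤ _ := by linarith
  · rw [map_add, map_smul, map_smul, hAν, hy, smul_eq_mul, smul_eq_mul]
    ring
  · have : sesqPart B X ((y - b * N) • ν + b • X) + β / 6 = -(b * N * sesqPart B X ν) := by
      rw [sesqPart_add_smul, sesqPart_self hsymm, hbmul]
      ring
    have h₀ : 0 ≤ (1 + (K + M * K) * K + M) * ‖X‖ ^ 2 * ‖N‖ := by positivity
    calc ‖sesqPart B X ((y - b * N) • ν + b • X) + β / 6‖
        = ‖b‖ * ‖N‖ * ‖sesqPart B X ν‖ := by rw [this, norm_neg, norm_mul, norm_mul]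
      _ ≤ M * ‖X‖ * ‖N‖ * (2 * K ^ 2 * ‖X‖) := by gcongr
      _ ≤ _ := by linarith

theorem third_order_expansion_eq {A : E →L[ℝ] ℝ} {B : E →L[ℝ] E →L[ℝ] ℝ} {X Y Z : E} {α β w : ℂ}
    (hY : 2 * delForm A Y + bilinPart B X X / 2 = 0)
    (hZ : 2 * delForm A Z + bilinPart B X Y + α / 6 = 0) :
    A (w • X + (w ^ 2 • Y + w ^ 3 • Z)) +
        2⁻¹ * (B (w • X) (w • X) + 2 * B (w • X) (w ^ 2 • Y)) +
        6⁻¹ * (α * w ^ 3 + β * (‖w‖ ^ 2 * w)).re =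
      2 * (w * delForm A X).re + ‖w‖ ^ 2 * leviPart B X +
        (‖w‖ ^ 2 * w * (sesqPart B X Y + β / 6)).re := by
  have hconj : conj w * w = (‖w‖ : ℂ) ^ 2 := Complex.conj_mul' w
  have key : 2 * (w ^ 2 * delForm A Y + w ^ 3 * delForm A Z) +
      2⁻¹ * (bilinPart B X X * w ^ 2) + (bilinPart B X Y * w * w ^ 2 +
      sesqPart B X Y * conj w * w ^ 2) + 6⁻¹ * (α * w ^ 3 + β * (‖w‖ ^ 2 * w)) =
      ‖w‖ ^ 2 * w * (sesqPart B X Y + β / 6) := by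
    linear_combination w ^ 2 * hY + w ^ 3 * hZ + sesqPart B X Y * w * hconj
  rw [← two_mul_re_delForm, apply_smul_smul_self, apply_smul_smul, ← key]
  have hscale (t : ℝ) (z : ℂ) : ((t : ℂ) * z).re = t * z.re := re_ofReal_mul t z
  have h₂ := hscale 2
  have h₂' := hscale 2⁻¹
  have h₆ := hscale 6⁻¹
  push_cast at h₂ h₂' h₆
  simp only [map_add, map_smul, smul_eq_mul, add_re, h₂, h₂', h₆]
  ring

theorem exists_cubic_coeffs {c : ℝ} (hc : 0 < c) (K : ℝ) : ∃ D > 0, ∀ (A : E →L[ℝ] ℝ)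
    (B : E →L[ℝ] E →L[ℝ] ℝ) (ν X : E) (α β : ℂ), (∀ u v, B u v = B v u) → ‖A‖ ≤ K → ‖B‖ ≤ K →
    ‖ν‖ ≤ K → delForm A ν = 1 → c * ‖X‖ ^ 2 ≤ leviPart B X → ‖α‖ ≤ 3 * K * ‖X‖ ^ 3 →
    ‖β‖ ≤ 3 * K * ‖X‖ ^ 3 → ∃ Y Z : E, ‖Y‖ ≤ D * ‖X‖ ^ 2 ∧ ‖Z‖ ≤ D * ‖X‖ ^ 3 ∧
      2 * delForm A Y + bilinPart B X X / 2 = 0 ∧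
      2 * delForm A Z + bilinPart B X Y + α / 6 = 0 ∧
      ‖sesqPart B X Y + β / 6‖ ≤ D * ‖X‖ ^ 2 * ‖delForm A X‖ := by
  obtain ⟨D, hD, hquad⟩ := exists_quadratic_coeff (E := E) hc K
  have hDle : D ≤ D + (|K| * D + |K|) * |K| := le_add_of_nonneg_right (by positivity)
  refine ⟨D + (|K| * D + |K|) * |K|, by positivity,
    fun A B ν X α β hsymm hA hB hν hAν hX hα hβ => ?_⟩
  have hK : 0 ≤ K := (norm_nonneg ν).trans hν
  rw [abs_of_nonneg hK] at hDle ⊢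
  obtain ⟨Y, hY, hAY, hhY⟩ := hquad A B ν X β hsymm hA hB hν hAν hX hβ
  refine ⟨Y, (-(bilinPart B X Y + α / 6) / 2) • ν, hY.trans (by gcongr), ?_, hAY, ?_,
    hhY.trans (by gcongr)⟩
  · have : 0 ≤ K * ‖X‖ ^ 3 * K := by positivity
    have : 0 ≤ D * ‖X‖ ^ 3 := by positivity
    calc _ ≤ (‖bilinPart B X Y‖ + ‖α‖ / 6) / 2 * ‖ν‖ := by
          rw [norm_smul, norm_div, norm_neg, RCLike.norm_ofNat]
          gcongr
          exact (norm_add_le _ _).trans_eq (by rw [norm_div, RCLike.norm_ofNat])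
      _ ≤ (2 * K * ‖X‖ * (D * ‖X‖ ^ 2) + 3 * K * ‖X‖ ^ 3 / 6) / 2 * K := by
          gcongr
          exact (norm_bilinPart_le hB).trans (by gcongr)
      _ ≤ _ := by linarith
  · rw [map_smul, hAν, smul_eq_mul]
    ring

/-- The disc `λ ↦ λX + λ²Y + λ³Z` follows the level set to third order, up to a mixed term that
vanishes for complex tangential `X`. -/
theorem exists_cubic_osculation {c : ℝ} (hc : 0 < c) (K : ℝ) : ∃ D > 0, ∀ (A : E →L[ℝ] ℝ)
    (B : E →L[ℝ] E →L[ℝ] ℝ) (T : E →L[ℝ] E →L[ℝ] E →L[ℝ] ℝ) (ν X : E), (∀ u v, B u v = B v u) →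
    ‖A‖ ≤ K → ‖B‖ ≤ K → ‖T‖ ≤ K → ‖ν‖ ≤ K → delForm A ν = 1 → c * ‖X‖ ^ 2 ≤ leviPart B X →
    ∃ Y Z : E, ‖Y‖ ≤ D * ‖X‖ ^ 2 ∧ ‖Z‖ ≤ D * ‖X‖ ^ 3 ∧ ∀ w : ℂ, ∀ v, ‖w‖ * ‖X‖ ≤ 1 →
      v = w • X + (w ^ 2 • Y + w ^ 3 • Z) → A v + 2⁻¹ * B v v + 6⁻¹ * T v v v ≤
        2 * (w * delForm A X).re + ‖w‖ ^ 2 * leviPart B X + D * (‖w‖ * ‖X‖) ^ 4 +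
          D * ‖w‖ ^ 3 * ‖X‖ ^ 2 * ‖delForm A X‖ := by
  obtain ⟨D, hD, hcoeffs⟩ := exists_cubic_coeffs (E := E) hc K
  have hDle : D ≤ D + |K| * D * (1 + 2 * D) * (2 + 2 * D) := le_add_of_nonneg_right (by positivity)
  refine ⟨D + |K| * D * (1 + 2 * D) * (2 + 2 * D), by positivity,
    fun A B T ν X hsymm hA hB hT hν hAν hX => ?_⟩
  have hK : 0 ≤ K := (norm_nonneg ν).trans hν
  rw [abs_of_nonneg hK] at hDle ⊢
  obtain ⟨α, β, hα, hβ, hTX⟩ := exists_apply_smul_pow_three_eq hT X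
  obtain ⟨Y, Z, hY, hZ, hAY, hAZ, hhY⟩ := hcoeffs A B ν X α β hsymm hA hB hν hAν hX hα hβ
  refine ⟨Y, Z, hY.trans (by gcongr), hZ.trans (by gcongr), fun w v hw hv => ?_⟩
  have hexp := third_order_expansion_eq (w := w) (β := β) hAY hAZ
  have hu := (norm_smul w X).le
  have hw₂ := norm_pow_smul_le w hY
  have hw₃ := norm_pow_smul_le w hZ
  have hB' := (abs_le.1 (abs_apply_add_add_sub_le hsymm hB hw hD.le hu hw₂ hw₃)).2
  have hT' := (abs_le.1 (abs_apply_add_pow_three_sub_le hT hw (by positivity) hu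
    (norm_add_le_of_quadratic_cubic (by positivity) hw hD.le hw₂ hw₃))).2
  have hmixed : (‖w‖ ^ 2 * w * (sesqPart B X Y + β / 6)).re ≤
      D * ‖w‖ ^ 3 * ‖X‖ ^ 2 * ‖delForm A X‖ := calc
    _ ≤ ‖w‖ ^ 2 * ‖w‖ * ‖sesqPart B X Y + β / 6‖ := by
      refine (re_le_norm _).trans_eq ?_
      rw [norm_mul, norm_mul, norm_pow, norm_real, norm_norm]
    _ ≤ ‖w‖ ^ 2 * ‖w‖ * (D * ‖X‖ ^ 2 * ‖delForm A X‖) := by gcongr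
    _ = _ := by ring
  have hmixed' := mul_le_mul_of_nonneg_right hDle
    (by positivity : 0 ≤ ‖w‖ ^ 3 * ‖X‖ ^ 2 * ‖delForm A X‖)
  have ha₄ : 0 ≤ D * (‖w‖ * ‖X‖) ^ 4 := by positivity
  rw [← hTX] at hexp
  rw [hv]
  linarith

end Osculation

section OsculatingDiscs

open Complex Filter Topology

variable {E : Type} [NormedAddCommGroup E]

theorem eventually_atTop_eventually_norm_le {F : Type*} [NormedAddCommGroup F] {f : E → F} {p : E}
    (hf : ContinuousAt f p) : ∀ᶠ K in atTop, ∀ᶠ z in 𝓝 p, ‖f z‖ ≤ K := by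
  filter_upwards [eventually_gt_atTop ‖f p‖] with K hK
  exact (hf.norm.eventually_lt_const hK).mono fun _ => le_of_lt

variable [NormedSpace ℝ E]

theorem sum_range_three_iteratedFDeriv (r : E → ℝ) (z v : E) :
    ∑ k ∈ Finset.range 3, (k.factorial : ℝ)⁻¹ • iteratedFDeriv ℝ k r z (fun _ => v) =
      r z + (fderiv ℝ r z v + 2⁻¹ * fderiv ℝ (fderiv ℝ r) z v v) := by
  simp [Finset.sum_range_succ, iteratedFDeriv_two_apply, Nat.factorial, add_assoc]

theorem sum_range_four_iteratedFDeriv (r : E → ℝ) (z v : E) :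
    ∑ k ∈ Finset.range 4, (k.factorial : ℝ)⁻¹ • iteratedFDeriv ℝ k r z (fun _ => v) =
      r z + (fderiv ℝ r z v + 2⁻¹ * fderiv ℝ (fderiv ℝ r) z v v +
        6⁻¹ * fderiv ℝ (fderiv ℝ (fderiv ℝ r)) z v v v) := by
  have : iteratedFDeriv ℝ 3 r z (fun _ => v) = fderiv ℝ (fderiv ℝ (fderiv ℝ r)) z v v v := by
    rw [iteratedFDeriv_succ_apply_right, iteratedFDeriv_two_apply]
    rfl
  rw [Finset.sum_range_succ, sum_range_three_iteratedFDeriv, this, add_assoc]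
  norm_num [Nat.factorial]

theorem ContDiffHolderAt.exists_eventually_taylor {ε : ℝ≥0} {m : ℕ} {r : E → ℝ} {p : E}
    (hr : ContDiffHolderAt ε (m + 1) r p) : ∃ C ≥ 0, ∃ η > 0, ∀ᶠ z in 𝓝 p, ∀ v, ‖v‖ < η →
      r (z + v) ≤ ∑ k ∈ Finset.range (m + 2),
        (k.factorial : ℝ)⁻¹ • iteratedFDeriv ℝ k r z (fun _ => v) + C * ‖v‖ ^ (m + 1 + ε : ℝ) := by
  obtain ⟨C, hC, hbound⟩ := hr.isBigO_taylor.exists_nonneg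
  have hball := hbound.bound
  rw [nhds_prod_eq, eventually_prod_iff] at hball
  obtain ⟨P, hP, Q, hQ, hPQ⟩ := hball
  obtain ⟨η, hη, hQη⟩ := Metric.eventually_nhds_iff.1 hQ
  refine ⟨C, hC, η, hη, hP.mono fun z hz v hv => ?_⟩
  have := (le_abs_self _).trans (hPQ hz (hQη (by rwa [dist_zero_right])))
  rw [Real.norm_of_nonneg (by positivity)] at this
  exact sub_le_iff_le_add'.1 this

variable [NormedSpace ℂ E]

theorem leviPart_sub_le (B B' : E →L[ℝ] E →L[ℝ] ℝ) (X : E) :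
    leviPart B X - leviPart B' X ≤ ‖B - B'‖ * ‖X‖ ^ 2 := by
  have h₁ := (abs_le.1 (abs_apply_apply_le le_rfl le_rfl le_rfl : |(B - B') X X| ≤ _)).2
  have h₂ := (abs_le.1 (abs_apply_apply_le (le_refl ‖B - B'‖) (norm_I_smul X).le
    (norm_I_smul X).le)).2
  simp only [FunLike.coe_sub, Pi.sub_apply] at h₁ h₂
  have : 0 ≤ ‖B - B'‖ * ‖X‖ ^ 2 := by positivity
  simp only [leviPart]
  linarith

theorem eventually_le_leviPart {B : E → E →L[ℝ] E →L[ℝ] ℝ} {p : E} {b c : ℝ}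
    (hB : ContinuousAt B p) (hbc : b < c) (hp : ∀ X, c * ‖X‖ ^ 2 ≤ leviPart (B p) X) :
    ∀ᶠ z in 𝓝 p, ∀ X, b * ‖X‖ ^ 2 ≤ leviPart (B z) X := by
  filter_upwards [Metric.continuousAt_iff'.1 hB (c - b) (sub_pos.2 hbc)] with z hz X
  rw [dist_comm, dist_eq_norm] at hz
  have := mul_le_mul_of_nonneg_right hz.le (sq_nonneg ‖X‖)
  linarith [leviPart_sub_le (B p) (B z) X, hp X]

variable [IsScalarTower ℝ ℂ E]

/-- A form positive on the complex tangent space `ker ∂A` becomes positive everywhere after adding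
a large multiple of `|∂A|²`, by compactness of the unit sphere. -/
theorem exists_le_leviPart_add [ProperSpace E] {B : E →L[ℝ] E →L[ℝ] ℝ} {A : E →L[ℝ] ℝ}
    (h : ∀ X, X ≠ 0 → delForm A X = 0 → 0 < leviPart B X) :
    ∃ a ≥ 0, ∃ c > 0, ∀ X, c * ‖X‖ ^ 2 ≤ leviPart B X + a * ‖delForm A X‖ ^ 2 := by
  have hcont (m : ℝ) : Continuous fun X => leviPart B X + m * ‖delForm A X‖ ^ 2 := by
    unfold leviPart
    fun_prop
  have hmono {i j : ℕ} (hij : i ≤ j) : {X | 1 / (i + 1 : ℝ) < leviPart B X + i * ‖delForm A X‖ ^ 2}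
      ⊆ {X | 1 / (j + 1 : ℝ) < leviPart B X + j * ‖delForm A X‖ ^ 2} := fun X hX =>
    (by gcongr : 1 / (j + 1 : ℝ) ≤ 1 / (i + 1)).trans_lt (hX.trans_le (by gcongr))
  have hcover : sphere (0 : E) 1 ⊆
      ⋃ m : ℕ, {X | 1 / (m + 1 : ℝ) < leviPart B X + m * ‖delForm A X‖ ^ 2} := fun X hX => by
    rw [mem_iUnion]
    rcases eq_or_ne (delForm A X) 0 with hAX | hAX
    · obtain ⟨m, hm⟩ := exists_nat_one_div_lt (h X (ne_zero_of_mem_unit_sphere ⟨X, hX⟩) hAX)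
      exact ⟨m, by simpa [hAX] using hm⟩
    · obtain ⟨m, hm⟩ := exists_nat_gt ((1 - leviPart B X) / ‖delForm A X‖ ^ 2)
      rw [div_lt_iff₀ (by positivity)] at hm
      have : 1 / (m + 1 : ℝ) ≤ 1 := div_le_one_of_le₀ (by simp) (by positivity)
      exact ⟨m, this.trans_lt (sub_lt_iff_lt_add'.1 hm)⟩
  obtain ⟨m, hm⟩ := (isCompact_sphere (0 : E) 1).elim_directed_cover _
    (fun m : ℕ => isOpen_lt continuous_const (hcont m)) hcover
    (directed_of_isDirected_le fun _ _ => hmono)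
  refine ⟨m, m.cast_nonneg, 1 / (m + 1), by positivity, fun X => ?_⟩
  rcases eq_or_ne X 0 with rfl | hX
  · simp [leviPart]
  have hX' : ‖X‖ ≠ 0 := norm_ne_zero_iff.2 hX
  have hunit : ‖X‖⁻¹ • X ∈ sphere (0 : E) 1 := by
    rw [mem_sphere_zero_iff_norm, norm_smul, norm_inv, norm_norm, inv_mul_cancel₀ hX']
  have hlt : 1 / (m + 1 : ℝ) < _ := hm hunit
  rw [leviPart_smul, (delForm A).map_smul_of_tower, norm_smul, norm_inv, norm_norm, mul_pow,
    mul_left_comm, ← mul_add, inv_pow, ← div_eq_inv_mul, lt_div_iff₀ (by positivity)] at hlt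
  exact hlt.le

/-- Near `p`, the sublevel sets of `r` contain holomorphic discs `λ ↦ z + λX + λ²Y + λ³Z` along
which the pluriharmonic part of `r` is linear, up to an error of order `2 + 2e` in `|λX|`. The
second error term vanishes for complex tangential `X`. -/
def HasOsculatingDiscs (e : ℝ) (r : E → ℝ) (p : E) : Prop :=
  ∃ D > 0, ∀ᶠ z in 𝓝 p, ∀ X, ∃ Y Z : E, ‖Y‖ ≤ D * ‖X‖ ^ 2 ∧ ‖Z‖ ≤ D * ‖X‖ ^ 3 ∧
    ∀ w : ℂ, D * (‖w‖ * ‖X‖) ≤ 1 → r (z + (w • X + (w ^ 2 • Y + w ^ 3 • Z))) ≤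
      r z + 2 * (w * delForm (fderiv ℝ r z) X).re +
        ‖w‖ ^ 2 * leviPart (fderiv ℝ (fderiv ℝ r) z) X + D * (‖w‖ * ‖X‖) ^ (2 + 2 * e) +
        D * ‖w‖ ^ 3 * ‖X‖ ^ 2 * ‖delForm (fderiv ℝ r z) X‖

theorem mul_pow_add_mul_rpow_le {a b C D M s : ℝ} {k : ℕ} (hC : 0 ≤ C) (hD : 0 ≤ D)
    (ha : a ∈ Set.Icc (0 : ℝ) 1) (hb : 0 ≤ b) (hba : b ≤ M * a) (hM : 0 ≤ M) (hs : 0 ≤ s)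
    (hsk : s ≤ k) : D * a ^ k + C * b ^ s ≤ (D + C * M ^ s) * a ^ s := by
  have hak : a ^ k ≤ a ^ s := by
    rw [← Real.rpow_natCast]
    exact Real.rpow_le_rpow_of_exponent_ge' ha.1 ha.2 hs hsk
  calc D * a ^ k + C * b ^ s ≤ D * a ^ s + C * (M * a) ^ s := by gcongr
    _ = (D + C * M ^ s) * a ^ s := by
        rw [Real.mul_rpow hM ha.1]
        ring

theorem HasOsculatingDiscs.of_taylorPolynomial {ε : ℝ≥0} {m : ℕ} {r : E → ℝ} {p : E} {e D : ℝ}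
    (hε : ε ≤ 1) (he : m + 1 + ε = 2 + 2 * e) (hr : ContDiffHolderAt ε (m + 1) r p) (hD : 0 < D)
    (h : ∀ᶠ z in 𝓝 p, ∀ X, ∃ Y Z : E, ‖Y‖ ≤ D * ‖X‖ ^ 2 ∧ ‖Z‖ ≤ D * ‖X‖ ^ 3 ∧
      ∀ (w : ℂ) (v : E), ‖w‖ * ‖X‖ ≤ 1 → v = w • X + (w ^ 2 • Y + w ^ 3 • Z) →
      ∑ k ∈ Finset.range (m + 2), (k.factorial : ℝ)⁻¹ • iteratedFDeriv ℝ k r z (fun _ => v) ≤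
        r z + 2 * (w * delForm (fderiv ℝ r z) X).re +
          ‖w‖ ^ 2 * leviPart (fderiv ℝ (fderiv ℝ r) z) X + D * (‖w‖ * ‖X‖) ^ (m + 2) +
          D * ‖w‖ ^ 3 * ‖X‖ ^ 2 * ‖delForm (fderiv ℝ r z) X‖) :
    HasOsculatingDiscs e r p := by
  obtain ⟨C, hC, η, hη, htaylor⟩ := hr.exists_eventually_taylor
  have hs : (0 : ℝ) < m + 1 + ε := by positivity
  set D' := 1 + D + C * (1 + 2 * D) ^ (m + 1 + ε : ℝ) + 2 * (1 + 2 * D) / η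
  have hDD' : D ≤ D' := by
    have : 0 ≤ C * (1 + 2 * D) ^ (m + 1 + ε : ℝ) + 2 * (1 + 2 * D) / η := by positivity
    linarith
  refine ⟨D', by positivity, ?_⟩
  filter_upwards [h, htaylor] with z hz htaylor X
  obtain ⟨Y, Z, hY, hZ, hYZ⟩ := hz X
  refine ⟨Y, Z, hY.trans (by gcongr), hZ.trans (by gcongr), fun w hw => ?_⟩
  rw [← he]
  set v := w • X + (w ^ 2 • Y + w ^ 3 • Z) with hv
  set a := ‖w‖ * ‖X‖
  have ha₀ : 0 ≤ a := by positivity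
  have hD'a {x : ℝ} (hx : x ≤ D') : x * a ≤ 1 := (mul_le_mul_of_nonneg_right hx ha₀).trans hw
  have hrest : 0 ≤ C * (1 + 2 * D) ^ (m + 1 + ε : ℝ) := by positivity
  have hrest' : 0 ≤ 2 * (1 + 2 * D) / η := by positivity
  have ha₁ : a ≤ 1 := by simpa using hD'a (x := 1) (by linarith)
  have hva : ‖v‖ ≤ (1 + 2 * D) * a := norm_cubic_le hD.le hY hZ ha₁
  have hvη : ‖v‖ < η := by
    have := hD'a (x := 2 * (1 + 2 * D) / η) (by linarith)
    rw [div_mul_eq_mul_div, div_le_one hη] at this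
    linarith
  have hm : (m + 1 + ε : ℝ) ≤ (m + 2 : ℕ) := by
    push_cast
    linarith [NNReal.coe_le_one.2 hε]
  have herr : D * a ^ (m + 2) + C * ‖v‖ ^ (m + 1 + ε : ℝ) ≤ D' * a ^ (m + 1 + ε : ℝ) :=
    (mul_pow_add_mul_rpow_le hC.le hD.le ⟨ha₀, ha₁⟩ (norm_nonneg v) hva (by positivity)
      hs.le hm).trans <| by
      gcongr
      linarith
  have hmixed := mul_le_mul_of_nonneg_right hDD'
    (by positivity : 0 ≤ ‖w‖ ^ 3 * ‖X‖ ^ 2 * ‖delForm (fderiv ℝ r z) X‖)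
  linarith [htaylor v hvη, hYZ w v ha₁ hv]

theorem eventually_atTop_eventually_delForm_eq_one {A : E → E →L[ℝ] ℝ} {p : E}
    (hA : ContinuousAt A p) (hp : A p ≠ 0) :
    ∀ᶠ K in atTop, ∀ᶠ z in 𝓝 p, ∃ ν, ‖ν‖ ≤ K ∧ delForm (A z) ν = 1 := by
  obtain ⟨v, hv⟩ := DFunLike.ne_iff.1 hp
  have hg : ContinuousAt (fun z => delForm (A z) v) p := by
    simp only [delForm_apply]
    fun_prop
  have hgp : delForm (A p) v ≠ 0 := fun h => hv (by simp [← two_mul_re_delForm, h])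
  have hν : ContinuousAt (fun z => (delForm (A z) v)⁻¹ • v) p :=
    (hg.inv₀ hgp).smul continuousAt_const
  filter_upwards [eventually_atTop_eventually_norm_le hν] with K hK
  filter_upwards [hK, hg.eventually_ne hgp] with z hz hgz
  exact ⟨_, hz, by rw [map_smul, smul_eq_mul, inv_mul_cancel₀ hgz]⟩

theorem ContDiffHolderAt.hasOsculatingDiscs_two {ε : ℝ≥0} {r : E → ℝ} {p : E} (hε : ε ≤ 1)
    (hr : ContDiffHolderAt ε 2 r p) (hp : fderiv ℝ r p ≠ 0) : HasOsculatingDiscs (ε / 2) r p := by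
  have hA : ContinuousAt (fderiv ℝ r) p := (succ_iff.1 hr).2.continuousAt
  have hB : ContinuousAt (fderiv ℝ (fderiv ℝ r)) p := (succ_iff.1 (succ_iff.1 hr).2).2.continuousAt
  obtain ⟨K, hBK, hνK⟩ := ((eventually_atTop_eventually_norm_le hB).and
    (eventually_atTop_eventually_delForm_eq_one hA hp)).exists
  obtain ⟨D, hD, hosc⟩ := exists_quadratic_osculation (E := E) K
  refine .of_taylorPolynomial (m := 1) hε (by push_cast; ring) hr hD ?_
  filter_upwards [hBK, hνK] with z hB ⟨ν, hν, hAν⟩ X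
  obtain ⟨Y, hY, hYw⟩ := hosc (fderiv ℝ r z) _ ν X hB hν hAν
  refine ⟨Y, 0, hY, norm_zero.trans_le (by positivity), fun w v hw hv => ?_⟩
  rw [smul_zero, add_zero] at hv
  have : 0 ≤ D * ‖w‖ ^ 3 * ‖X‖ ^ 2 * ‖delForm (fderiv ℝ r z) X‖ := by positivity
  rw [sum_range_three_iteratedFDeriv, hv]
  linarith [hYw w hw]

theorem ContDiffHolderAt.hasOsculatingDiscs_three {ε : ℝ≥0} {r : E → ℝ} {p : E} {c : ℝ}
    (hε : ε ≤ 1) (hr : ContDiffHolderAt ε 3 r p) (hp : fderiv ℝ r p ≠ 0) (hc : 0 < c)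
    (hlevi : ∀ X, c * ‖X‖ ^ 2 ≤ leviPart (fderiv ℝ (fderiv ℝ r) p) X) :
    HasOsculatingDiscs ((1 + ε) / 2) r p := by
  have hA : ContinuousAt (fderiv ℝ r) p := (succ_iff.1 hr).2.continuousAt
  have hB : ContinuousAt (fderiv ℝ (fderiv ℝ r)) p := (succ_iff.1 (succ_iff.1 hr).2).2.continuousAt
  have hT : ContinuousAt (fderiv ℝ (fderiv ℝ (fderiv ℝ r))) p :=
    (succ_iff.1 (succ_iff.1 (succ_iff.1 hr).2).2).2.continuousAt
  have hsymm : ∀ᶠ z in 𝓝 p, ∀ u v,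
      fderiv ℝ (fderiv ℝ r) z u v = fderiv ℝ (fderiv ℝ r) z v u :=
    (hr.contDiffAt.eventually (by simp)).mono fun z hz u v => hz.isSymmSndFDerivAt (by norm_num) u v
  obtain ⟨K, ⟨hAK, hBK⟩, hTK, hνK⟩ :=
    (((eventually_atTop_eventually_norm_le hA).and (eventually_atTop_eventually_norm_le hB)).and
      ((eventually_atTop_eventually_norm_le hT).and
        (eventually_atTop_eventually_delForm_eq_one hA hp))).exists
  obtain ⟨D, hD, hosc⟩ := exists_cubic_osculation (E := E) (half_pos hc) K
  refine .of_taylorPolynomial (m := 2) hε (by push_cast; ring) hr hD ?_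
  filter_upwards [hAK, hBK, hTK, hνK, hsymm, eventually_le_leviPart hB (half_lt_self hc) hlevi]
    with z hA hB hT ⟨ν, hν, hAν⟩ hsymm hlevi X
  obtain ⟨Y, Z, hY, hZ, hYZ⟩ := hosc _ _ _ ν X hsymm hA hB hT hν hAν (hlevi X)
  refine ⟨Y, Z, hY, hZ, fun w v hw hv => ?_⟩
  rw [sum_range_four_iteratedFDeriv]
  linarith [hYZ w v hw hv]

end OsculatingDiscs

section MobiusDiscs

variable {u ξ : ℂ}

theorem one_sub_norm_le_norm_one_add_mul (hu : ‖u‖ ≤ 1) (ξ : ℂ) : 1 - ‖ξ‖ ≤ ‖1 + u * ξ‖ := by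
  have := norm_sub_le_norm_add 1 (u * ξ)
  rw [norm_one, norm_mul] at this
  linarith [mul_le_of_le_one_left (norm_nonneg ξ) hu]

/-- The disc `λ = ξ/(1 + uξ)` turns the model domain `δ > 2 Re(λuδ) + |λ|²δ(1 - |u|²)` into the
unit disc `|ξ| < 1`. -/
theorem sq_norm_one_add_mul_mul_eq (h : 1 + u * ξ ≠ 0) (δ : ℝ) :
    ‖1 + u * ξ‖ ^ 2 * (-δ + 2 * (ξ / (1 + u * ξ) * (u * δ)).re +
      ‖ξ / (1 + u * ξ)‖ ^ 2 * (δ * (1 - ‖u‖ ^ 2))) = -(δ * (1 - ‖ξ‖ ^ 2)) := by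
  have hre : ‖1 + u * ξ‖ ^ 2 * (ξ / (1 + u * ξ) * (u * δ)).re =
      δ * ((u * ξ).re + ‖u * ξ‖ ^ 2) := by
    have : ξ / (1 + u * ξ) * (u * δ) = u * ξ * δ / (1 + u * ξ) := by ring
    rw [this, Complex.div_re, ← Complex.normSq_eq_norm_sq, ← Complex.normSq_eq_norm_sq]
    have := Complex.normSq_pos.2 h
    field_simp
    simp [Complex.normSq_apply]
    ring
  have hnorm : ‖1 + u * ξ‖ ^ 2 = 1 + 2 * (u * ξ).re + ‖u * ξ‖ ^ 2 := by
    rw [← Complex.normSq_eq_norm_sq, ← Complex.normSq_eq_norm_sq, Complex.normSq_add]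
    simp
    ring
  have hdiv : ‖1 + u * ξ‖ ^ 2 * ‖ξ / (1 + u * ξ)‖ ^ 2 = ‖ξ‖ ^ 2 := by
    rw [norm_div, ← mul_pow, mul_div_cancel₀ _ (norm_ne_zero_iff.2 h)]
  have hmul : ‖u * ξ‖ ^ 2 = ‖u‖ ^ 2 * ‖ξ‖ ^ 2 := by rw [norm_mul, mul_pow]
  rw [hmul] at hre hnorm
  linear_combination 2 * hre + δ * (1 - ‖u‖ ^ 2) * hdiv - δ * hnorm

theorem mul_sq_norm_div_mul_le {c x δ : ℝ} (hc : 0 ≤ c) (hu : ‖u‖ ≤ 1) (hξ : ‖ξ‖ < 1)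
    (hδ : 0 ≤ δ) (h : c * x ^ 2 ≤ δ * (1 - ‖u‖ ^ 2)) :
    c * (‖ξ / (1 + u * ξ)‖ * x) ^ 2 * ‖1 + u * ξ‖ ≤ 2 * δ := by
  have hW : 1 - ‖u‖ ≤ ‖1 + u * ξ‖ := by
    rw [mul_comm]
    exact one_sub_norm_le_norm_one_add_mul hξ.le u
  have hW₀ : 0 < ‖1 + u * ξ‖ :=
    (sub_pos.2 hξ).trans_le (one_sub_norm_le_norm_one_add_mul hu ξ)
  calc c * (‖ξ / (1 + u * ξ)‖ * x) ^ 2 * ‖1 + u * ξ‖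
      = ‖ξ‖ ^ 2 * (c * x ^ 2) / ‖1 + u * ξ‖ := by
        rw [norm_div]
        field_simp
    _ ≤ 1 * (δ * (1 - ‖u‖ ^ 2)) / ‖1 + u * ξ‖ := by
        gcongr ?_ / _
        exact mul_le_mul (pow_le_one₀ (norm_nonneg ξ) hξ.le) h (by positivity) zero_le_one
    _ = δ * (1 + ‖u‖) * (1 - ‖u‖) / ‖1 + u * ξ‖ := by ring
    _ ≤ δ * 2 * ‖1 + u * ξ‖ / ‖1 + u * ξ‖ := by
        gcongr
        linarith
    _ = 2 * δ := by field_simp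

theorem rpow_mul_sq_le {a c e δ W : ℝ} (ha : 0 ≤ a) (hc : 0 < c) (he : e ∈ Set.Icc (0 : ℝ) 1)
    (hW : W ∈ Set.Ioc (0 : ℝ) 2) (h : c * a ^ 2 * W ≤ 2 * δ) :
    a ^ (2 + 2 * e) * W ^ 2 ≤ 2 * (2 / c) ^ (1 + e) * δ ^ (1 + e) := by
  have hδ : 0 ≤ δ := by nlinarith [mul_nonneg (mul_nonneg hc.le (sq_nonneg a)) hW.1.le]
  have ha₂ : a ^ 2 ≤ 2 / c * δ / W := by
    rw [le_div_iff₀ hW.1, div_mul_eq_mul_div, le_div_iff₀ hc]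
    linarith
  have hW₁ : W ^ (1 - e) ≤ 2 :=
    (Real.rpow_le_rpow hW.1.le hW.2 (sub_nonneg.2 he.2)).trans
      (Real.rpow_le_self_of_one_le one_le_two (sub_le_self 1 he.1))
  have hW₂ : W ^ 2 = W ^ (1 + e) * W ^ (1 - e) := by
    rw [← Real.rpow_add hW.1, ← Real.rpow_natCast]
    norm_num
  have he₁ : 0 ≤ 1 + e := by linarith [he.1]
  calc a ^ (2 + 2 * e) * W ^ 2 = (a ^ 2) ^ (1 + e) * W ^ 2 := by
        rw [← Real.rpow_natCast a, ← Real.rpow_mul ha]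
        congr 2
        push_cast
        ring
    _ ≤ (2 / c * δ / W) ^ (1 + e) * W ^ 2 := by gcongr
    _ = (2 / c) ^ (1 + e) * δ ^ (1 + e) * W ^ (1 - e) := by
        have := (Real.rpow_pos_of_pos hW.1 (1 + e)).ne'
        rw [Real.div_rpow (by positivity) hW.1.le, Real.mul_rpow (by positivity) hδ, hW₂]
        field_simp
    _ ≤ (2 / c) ^ (1 + e) * δ ^ (1 + e) * 2 := by gcongr
    _ = 2 * (2 / c) ^ (1 + e) * δ ^ (1 + e) := by ring

theorem mul_le_one_of_mul_sq_mul_le {a c D δ W : ℝ} (ha : 0 ≤ a) (hc : 0 < c) (hD : 0 ≤ D)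
    (hW : 0 < W) (h : c * a ^ 2 * W ≤ 2 * δ) (hDW : 2 * D ^ 2 / c * δ ≤ W) : D * a ≤ 1 := by
  rw [div_mul_eq_mul_div, div_le_iff₀ hc] at hDW
  rw [← pow_le_one_iff_of_nonneg (by positivity) two_ne_zero, mul_pow]
  refine le_of_mul_le_mul_right ?_ (mul_pos hc hW)
  linarith [mul_le_mul_of_nonneg_left h (sq_nonneg D)]

theorem pow_three_mul_norm_mul_sq_le {a c x δ W : ℝ} (hc : 0 < c) (hδ : 0 ≤ δ)
    (hu : ‖u‖ ≤ 1) (haW : a * W ∈ Set.Icc (0 : ℝ) 1) (h : c * (a * x) ^ 2 * W ≤ 2 * δ) :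
    a ^ 3 * x ^ 2 * ‖u * δ‖ * W ^ 2 ≤ 2 / c * δ ^ 2 := by
  have h' : (a * x) ^ 2 * W ≤ 2 * δ / c := by
    rw [le_div_iff₀ hc]
    linarith
  calc a ^ 3 * x ^ 2 * ‖u * δ‖ * W ^ 2 = (a * x) ^ 2 * W * (a * W) * (‖u‖ * δ) := by
        rw [norm_mul, Complex.norm_of_nonneg hδ]
        ring
    _ ≤ 2 * δ / c * 1 * (1 * δ) := by
        gcongr
        · exact haW.1
        · exact haW.2
    _ = 2 / c * δ ^ 2 := by ring

theorem exists_mobius_disc_neg {c D e : ℝ} (hc : 0 < c) (hD : 0 < D) (he : e ∈ Set.Icc (0 : ℝ) 1) :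
    ∃ K > 0, ∀ (δ x : ℝ) (u ξ : ℂ), δ ∈ Set.Ioc (0 : ℝ) 1 → 0 ≤ x → ‖u‖ ≤ 1 →
      c * x ^ 2 ≤ δ * (1 - ‖u‖ ^ 2) → ‖ξ‖ ≤ 1 - K * δ ^ e → ∀ w, w = ξ / (1 + u * ξ) →
      D * (‖w‖ * x) ≤ 1 ∧ -δ + 2 * (w * (u * δ)).re + ‖w‖ ^ 2 * (δ * (1 - ‖u‖ ^ 2)) +
        D * (‖w‖ * x) ^ (2 + 2 * e) + D * ‖w‖ ^ 3 * x ^ 2 * ‖u * δ‖ < 0 := by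
  refine ⟨2 * D ^ 2 / c + D * (2 * (2 / c) ^ (1 + e) + 2 / c) + 1, by positivity, ?_⟩
  rintro δ x u ξ ⟨hδ, hδ₁⟩ hx hu hux hξ w rfl
  set K := 2 * D ^ 2 / c + D * (2 * (2 / c) ^ (1 + e) + 2 / c) + 1 with hK
  set W := ‖1 + u * ξ‖
  set w := ξ / (1 + u * ξ) with hw
  have hδe : δ ≤ δ ^ e := Real.self_le_rpow_of_le_one hδ.le hδ₁ he.2
  have hδpow : δ ^ (1 + e) = δ * δ ^ e := by rw [Real.rpow_add hδ, Real.rpow_one]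
  have hξ₁ : ‖ξ‖ < 1 := hξ.trans_lt (sub_lt_self _ (by positivity))
  have hWK : K * δ ^ e ≤ W := by linarith [one_sub_norm_le_norm_one_add_mul hu ξ]
  have hW₀ : 0 < W := lt_of_lt_of_le (by positivity) hWK
  have hW₂ : W ≤ 2 := by
    have := norm_add_le 1 (u * ξ)
    rw [norm_one, norm_mul] at this
    linarith [mul_le_one₀ hu (norm_nonneg ξ) hξ₁.le]
  have ha := mul_sq_norm_div_mul_le hc.le hu hξ₁ hδ.le hux
  have herr₁ : (‖w‖ * x) ^ (2 + 2 * e) * W ^ 2 ≤ 2 * (2 / c) ^ (1 + e) * δ ^ (1 + e) :=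
    rpow_mul_sq_le (by positivity) hc he ⟨hW₀, hW₂⟩ ha
  have herr₂ : ‖w‖ ^ 3 * x ^ 2 * ‖u * δ‖ * W ^ 2 ≤ 2 / c * δ ^ (1 + e) := by
    have hwW : ‖w‖ * W = ‖ξ‖ := by rw [hw, norm_div, div_mul_cancel₀ _ hW₀.ne']
    refine (pow_three_mul_norm_mul_sq_le hc hδ.le hu
      (hwW ▸ ⟨norm_nonneg ξ, hξ₁.le⟩) ha).trans ?_
    rw [hδpow, sq]
    gcongr
  constructor
  · refine mul_le_one_of_mul_sq_mul_le (by positivity) hc hD.le hW₀ ha (le_trans ?_ hWK)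
    gcongr
    rw [hK, add_assoc]
    exact le_add_of_nonneg_right (by positivity)
  · refine neg_of_mul_neg_right (a := W ^ 2) ?_ (by positivity)
    have hmodel := sq_norm_one_add_mul_mul_eq (norm_ne_zero_iff.1 hW₀.ne') δ
    have hξ₂ : K * δ ^ e ≤ 1 - ‖ξ‖ ^ 2 := by
      linarith [pow_le_of_le_one (norm_nonneg ξ) hξ₁.le two_ne_zero]
    have hmain := mul_le_mul_of_nonneg_left hξ₂ hδ.le
    have hrest : 0 < (2 * D ^ 2 / c + 1) * δ ^ (1 + e) := by positivity
    rw [mul_left_comm, ← hδpow, hK] at hmain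
    linarith [mul_le_mul_of_nonneg_left herr₁ hD.le, mul_le_mul_of_nonneg_left herr₂ hD.le]

end MobiusDiscs

section Kobayashi

open Filter Topology

theorem kobayashi_smul_le {Ω : Set (Cn n)} {z V : Cn n} {φ : ℂ → Cn n} {s t : ℝ} (hs : 0 < s)
    (ht : 0 ≤ t) (hφ : DifferentiableOn ℂ φ (ball 0 s)) (hΩ : MapsTo φ (ball 0 s) Ω)
    (hz : φ 0 = z) (hV : HasDerivAt φ V 0) : kobayashi Ω z (t • V) ≤ t / s := by
  have hmaps : MapsTo (fun ζ : ℂ => s * ζ) (ball 0 1) (ball 0 s) := fun ζ hζ => by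
    rw [mem_ball_zero_iff] at hζ ⊢
    rw [norm_mul, Complex.norm_of_nonneg hs.le]
    exact mul_lt_of_lt_one_right hs hζ
  refine csInf_le ⟨0, ?_⟩ ⟨(t / s : ℝ), fun ζ => φ (s * ζ), hφ.comp (by fun_prop) hmaps,
    hΩ.comp hmaps, by simpa using hz, ?_, (Complex.norm_of_nonneg (by positivity)).symm⟩
  · rintro _ ⟨α, ψ, -, -, -, -, rfl⟩
    exact norm_nonneg α
  · rw [deriv_comp_mul_left, mul_zero, hV.deriv, smul_smul, ← Complex.ofReal_mul,
      div_mul_cancel₀ t hs.ne', Complex.coe_smul]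

/-- The expression `M(z;X) = (|⟨∂r(z),X⟩|²/r(z)² - L_r(z;X)/r(z))^{1/2}` attached to a function
`r`. For `r = -δ_Ω` it is the right-hand side of the estimate of the Kobayashi metric. -/
def boundaryMetric (r : Cn n → ℝ) (z X : Cn n) : ℝ :=
  √(‖delForm (fderiv ℝ r z) X‖ ^ 2 / r z ^ 2 + leviPart (fderiv ℝ (fderiv ℝ r) z) X / -r z)

theorem boundaryMetric_smul (r : Cn n → ℝ) (z X : Cn n) {t : ℝ} (ht : 0 ≤ t) :
    boundaryMetric r z (t • X) = t * boundaryMetric r z X := by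
  rw [boundaryMetric, boundaryMetric, leviPart_smul, (delForm _).map_smul_of_tower, norm_smul,
    mul_pow, Real.norm_eq_abs, sq_abs, mul_div_assoc, mul_div_assoc, ← mul_add,
    Real.sqrt_mul (sq_nonneg t), Real.sqrt_sq ht]

theorem HasOsculatingDiscs.exists_mem {Ω : Set (Cn n)} {r : Cn n → ℝ} {p : Cn n} {e : ℝ}
    (h : HasOsculatingDiscs e r p) (hΩ : ∀ᶠ z in 𝓝 p, r z < 0 → z ∈ Ω) :
    ∃ D > 0, ∀ᶠ z in 𝓝 p, ∀ X, ∃ Y Z : Cn n, ∀ w : ℂ, D * (‖w‖ * ‖X‖) ≤ 1 →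
      r z + 2 * (w * delForm (fderiv ℝ r z) X).re +
        ‖w‖ ^ 2 * leviPart (fderiv ℝ (fderiv ℝ r) z) X + D * (‖w‖ * ‖X‖) ^ (2 + 2 * e) +
        D * ‖w‖ ^ 3 * ‖X‖ ^ 2 * ‖delForm (fderiv ℝ r z) X‖ < 0 →
      z + (w • X + (w ^ 2 • Y + w ^ 3 • Z)) ∈ Ω := by
  obtain ⟨D, hD, h⟩ := h
  obtain ⟨R, hR, hball⟩ := Metric.eventually_nhds_iff_ball.1 hΩ
  have hR' : 0 ≤ 2 * (1 + 2 * D) / R := by positivity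
  set D' := 1 + D + 2 * (1 + 2 * D) / R
  have hDD' : D ≤ D' := by linarith
  refine ⟨D', by positivity, ?_⟩
  filter_upwards [h, ball_mem_nhds p (half_pos hR)] with z hz hzp X
  obtain ⟨Y, Z, hY, hZ, hYZ⟩ := hz X
  refine ⟨Y, Z, fun w hw hneg => hball _ ?_ ?_⟩
  · have hD'a {x : ℝ} (hx : x ≤ D') : x * (‖w‖ * ‖X‖) ≤ 1 :=
      (mul_le_mul_of_nonneg_right hx (by positivity)).trans hw
    have hv := norm_cubic_le hD.le hY hZ (by simpa using hD'a (x := 1) (by linarith))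
    have hvR := hD'a (x := 2 * (1 + 2 * D) / R) (by linarith)
    rw [div_mul_eq_mul_div, div_le_one hR] at hvR
    rw [mem_ball, dist_eq_norm] at hzp ⊢
    rw [add_sub_right_comm]
    linarith [norm_add_le_of_le hzp.le hv, norm_add_le (z - p) (w • X + (w ^ 2 • Y + w ^ 3 • Z))]
  · refine (hYZ w ((mul_le_mul_of_nonneg_right hDD' (by positivity)).trans hw)).trans_lt
      (lt_of_le_of_lt ?_ hneg)
    gcongr

theorem hasDerivAt_add_cubic_smul {f : ℂ → ℂ} (hf : HasDerivAt f 1 0) (hf₀ : f 0 = 0)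
    (z X Y Z : Cn n) :
    HasDerivAt (fun ξ => z + (f ξ • X + (f ξ ^ 2 • Y + f ξ ^ 3 • Z))) X 0 := by
  simpa [hf₀] using ((hf.smul_const X).add
    (((hf.pow 2).smul_const Y).add ((hf.pow 3).smul_const Z))).const_add z

theorem hasDerivAt_div_one_add_mul (u : ℂ) :
    HasDerivAt (fun ξ : ℂ => ξ / (1 + u * ξ)) 1 0 := by
  simpa using (hasDerivAt_id (0 : ℂ)).fun_div
    (((hasDerivAt_id (0 : ℂ)).const_mul u).const_add 1) (by simp)

theorem leviPart_eq_of_boundaryMetric_eq_one {r : Cn n → ℝ} {z X : Cn n} {u : ℂ} (hz : r z < 0)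
    (hX : boundaryMetric r z X = 1) (hu : delForm (fderiv ℝ r z) X = u * (-r z : ℝ)) :
    leviPart (fderiv ℝ (fderiv ℝ r) z) X = -r z * (1 - ‖u‖ ^ 2) := by
  rw [boundaryMetric, Real.sqrt_eq_one, hu, norm_mul, Complex.norm_of_nonneg (neg_pos.2 hz).le,
    mul_pow, neg_sq, mul_div_cancel_right₀ _ (pow_ne_zero 2 hz.ne)] at hX
  rw [← hX]
  field_simp [hz.ne]
  ring

theorem HasOsculatingDiscs.exists_kobayashi_smul_le {Ω : Set (Cn n)} {r : Cn n → ℝ} {p : Cn n}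
    {c e : ℝ} (h : HasOsculatingDiscs e r p) (he : e ∈ Set.Icc (0 : ℝ) 1)
    (hΩ : ∀ᶠ z in 𝓝 p, r z < 0 → z ∈ Ω) (hc : 0 < c)
    (hlevi : ∀ᶠ z in 𝓝 p, ∀ X, c * ‖X‖ ^ 2 ≤ leviPart (fderiv ℝ (fderiv ℝ r) z) X) :
    ∃ K > 0, ∀ᶠ z in 𝓝 p, r z ∈ Set.Ico (-1 : ℝ) 0 → K * (-r z) ^ e < 1 →
      ∀ X, boundaryMetric r z X = 1 → ∀ t ≥ 0,
        kobayashi Ω z (t • X) ≤ t / (1 - K * (-r z) ^ e) := by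
  obtain ⟨D, hD, hdisc⟩ := h.exists_mem hΩ
  obtain ⟨K, hK, hmobius⟩ := exists_mobius_disc_neg hc hD he
  refine ⟨K, hK, ?_⟩
  filter_upwards [hdisc, hlevi] with z hdisc hlevi hz hKz X hX t ht
  obtain ⟨Y, Z, hYZ⟩ := hdisc X
  have hδ : 0 < -r z := neg_pos.2 hz.2
  have hδ' : ((-r z : ℝ) : ℂ) ≠ 0 := Complex.ofReal_ne_zero.2 hδ.ne'
  set u := delForm (fderiv ℝ r z) X / (-r z : ℝ)
  have hN : delForm (fderiv ℝ r z) X = u * (-r z : ℝ) := (div_mul_cancel₀ _ hδ').symm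
  have hH := leviPart_eq_of_boundaryMetric_eq_one hz.2 hX hN
  have hHX := hlevi X
  rw [hH] at hHX
  have hu : ‖u‖ ≤ 1 := by
    have := nonneg_of_mul_nonneg_right (le_trans (by positivity) hHX) hδ
    exact (sq_le_one_iff₀ (norm_nonneg u)).1 (sub_nonneg.1 this)
  have hden {ξ : ℂ} (hξ : ξ ∈ ball 0 (1 - K * (-r z) ^ e)) : 1 + u * ξ ≠ 0 := by
    have hKδ : 0 < K * (-r z) ^ e := by positivity
    rw [mem_ball_zero_iff] at hξ
    exact norm_pos_iff.1
      ((by linarith : 0 < 1 - ‖ξ‖).trans_le (one_sub_norm_le_norm_one_add_mul hu ξ))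
  refine kobayashi_smul_le (φ := fun ξ => z + ((ξ / (1 + u * ξ)) • X +
    ((ξ / (1 + u * ξ)) ^ 2 • Y + (ξ / (1 + u * ξ)) ^ 3 • Z))) (sub_pos.2 hKz) ht ?_ ?_ ?_ ?_
  · have : DifferentiableOn ℂ (fun ξ => ξ / (1 + u * ξ)) (ball 0 (1 - K * (-r z) ^ e)) :=
      differentiableOn_id.fun_div (by fun_prop) fun ξ hξ => hden hξ
    fun_prop
  · intro ξ hξ
    obtain ⟨hsmall, hneg⟩ := hmobius (-r z) ‖X‖ u ξ ⟨hδ, neg_le.1 hz.1⟩ (norm_nonneg X) hu hHX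
      (mem_ball_zero_iff.1 hξ).le _ rfl
    refine hYZ _ hsmall ?_
    rw [neg_neg] at hneg
    rwa [hH, hN]
  · simp
  · exact hasDerivAt_add_cubic_smul (hasDerivAt_div_one_add_mul u) (by simp) z X Y Z

theorem HasOsculatingDiscs.exists_kobayashi_le {Ω : Set (Cn n)} {r : Cn n → ℝ} {p : Cn n}
    {c e : ℝ} (h : HasOsculatingDiscs e r p) (he : e ∈ Set.Ioc (0 : ℝ) 1)
    (hr : ContinuousAt r p) (hp : r p = 0) (hΩ : ∀ᶠ z in 𝓝 p, r z < 0 → z ∈ Ω) (hc : 0 < c)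
    (hlevi : ∀ᶠ z in 𝓝 p, ∀ X, c * ‖X‖ ^ 2 ≤ leviPart (fderiv ℝ (fderiv ℝ r) z) X) :
    ∃ C > 0, ∀ᶠ z in 𝓝 p, r z < 0 → ∀ X,
      kobayashi Ω z X ≤ (1 + C * (-r z) ^ e) * boundaryMetric r z X := by
  obtain ⟨K, hK, hκ⟩ := h.exists_kobayashi_smul_le ⟨he.1.le, he.2⟩ hΩ hc hlevi
  have hlim : ContinuousAt (fun z => K * (-r z) ^ e) p :=
    continuousAt_const.mul (hr.neg.rpow_const (Or.inr he.1.le))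
  have hsmall : ∀ᶠ z in 𝓝 p, K * (-r z) ^ e < 1 / 2 :=
    hlim.eventually_lt continuousAt_const (by simp [hp, Real.zero_rpow he.1.ne'])
  refine ⟨2 * K, by positivity, ?_⟩
  filter_upwards [hκ, hΩ, hlevi, hsmall, hr.eventually (lt_mem_nhds (hp ▸ neg_one_lt_zero))]
    with z hκ hΩ hlevi hsmall hr₁ hr₀ X
  rcases eq_or_ne X 0 with rfl | hX
  · have := kobayashi_smul_le one_pos le_rfl (differentiableOn_const z) (fun _ _ => hΩ hr₀) rfl
      (hasDerivAt_const (0 : ℂ) z)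
    simpa [boundaryMetric, leviPart] using this
  have hδ : 0 < -r z := neg_pos.2 hr₀
  have hM : 0 < boundaryMetric r z X := by
    have hL : 0 < leviPart (fderiv ℝ (fderiv ℝ r) z) X :=
      lt_of_lt_of_le (by positivity) (hlevi X)
    exact Real.sqrt_pos.2 (by positivity)
  have hunit : boundaryMetric r z ((boundaryMetric r z X)⁻¹ • X) = 1 := by
    rw [boundaryMetric_smul _ _ _ (inv_nonneg.2 hM.le), inv_mul_cancel₀ hM.ne']
  have hX' := hκ ⟨hr₁.le, hr₀⟩ (by linarith) _ hunit _ hM.le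
  rw [smul_inv_smul₀ hM.ne'] at hX'
  refine hX'.trans ?_
  have hs : 0 ≤ K * (-r z) ^ e := by positivity
  rw [div_le_iff₀ (by linarith), mul_right_comm, mul_assoc 2]
  refine le_mul_of_one_le_left hM.le ?_
  nlinarith

end Kobayashi

section DefiningFunction

open Filter Topology

variable {d : Cn n → ℝ} {z : Cn n}

theorem fderiv_add_mul_sq (a : ℝ) (hd : DifferentiableAt ℝ d z) :
    fderiv ℝ (fun z => d z + a * d z ^ 2) z = (1 + 2 * a * d z) • fderiv ℝ d z := by
  refine (hd.hasFDerivAt.add ((hd.hasFDerivAt.pow 2).const_mul a)).fderiv.trans ?_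
  ext v
  simp
  ring

theorem fderiv_fderiv_add_mul_sq_apply (a : ℝ) (hd : ∀ᶠ w in 𝓝 z, DifferentiableAt ℝ d w)
    (hd' : DifferentiableAt ℝ (fderiv ℝ d) z) (X Y : Cn n) :
    fderiv ℝ (fderiv ℝ fun z => d z + a * d z ^ 2) z X Y =
      (1 + 2 * a * d z) * fderiv ℝ (fderiv ℝ d) z X Y +
        2 * a * (fderiv ℝ d z X * fderiv ℝ d z Y) := by
  have heq : (fderiv ℝ fun z => d z + a * d z ^ 2) =ᶠ[𝓝 z]
      fun w => (1 + 2 * a * d w) • fderiv ℝ d w := hd.mono fun w => fderiv_add_mul_sq a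
  rw [heq.fderiv_eq, (((hd.self_of_nhds.hasFDerivAt.const_mul (2 * a)).const_add 1).fun_smul
    hd'.hasFDerivAt).fderiv]
  simp
  ring

theorem leviPart_add_mul_sq (a : ℝ) (hd : ∀ᶠ w in 𝓝 z, DifferentiableAt ℝ d w)
    (hd' : DifferentiableAt ℝ (fderiv ℝ d) z) (X : Cn n) :
    leviPart (fderiv ℝ (fderiv ℝ fun z => d z + a * d z ^ 2) z) X =
      (1 + 2 * a * d z) * leviPart (fderiv ℝ (fderiv ℝ d) z) X +
        2 * a * ‖delForm (fderiv ℝ d z) X‖ ^ 2 := by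
  simp only [leviPart, fderiv_fderiv_add_mul_sq_apply a hd hd', norm_delForm_apply_sq]
  ring

theorem norm_delForm_add_mul_sq (a : ℝ) (hd : DifferentiableAt ℝ d z) (X : Cn n) :
    ‖delForm (fderiv ℝ (fun z => d z + a * d z ^ 2) z) X‖ ^ 2 =
      (1 + 2 * a * d z) ^ 2 * ‖delForm (fderiv ℝ d z) X‖ ^ 2 := by
  simp only [norm_delForm_apply_sq, fderiv_add_mul_sq a hd, smul_apply, smul_eq_mul]
  ring

theorem sq_mul_div_add_div_le {τ x y : ℝ} (hτ : τ ∈ Set.Icc (0 : ℝ) (1 / 6)) (hx : 0 ≤ x)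
    (hy : 0 ≤ (1 - 2 * τ) * y + 2 * τ * x) :
    (1 - 2 * τ) ^ 2 * x / (1 - τ) ^ 2 + ((1 - 2 * τ) * y + 2 * τ * x) / (1 - τ) ≤
      (1 + τ) ^ 2 * (x + y) := by
  obtain ⟨hτ₀, hτ₁⟩ := hτ
  have h₁ : 0 < 1 - τ := by linarith
  have hxy : x ≤ 2 * (x + y) := by nlinarith
  set b := τ / (1 - τ) with hb
  have hbτ : b ≤ 6 / 5 * τ := by
    rw [hb, div_le_iff₀ h₁]
    nlinarith
  have hb₀ : 0 ≤ b := by positivity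
  calc (1 - 2 * τ) ^ 2 * x / (1 - τ) ^ 2 + ((1 - 2 * τ) * y + 2 * τ * x) / (1 - τ)
      = (1 - b) * (x + y) + (b + b ^ 2) * x := by
        rw [hb]
        field_simp
        ring
    _ ≤ (1 - b) * (x + y) + (b + b ^ 2) * (2 * (x + y)) := by gcongr
    _ = (1 + b + 2 * b ^ 2) * (x + y) := by ring
    _ ≤ (1 + τ) ^ 2 * (x + y) := by
        gcongr
        · linarith
        · nlinarith

theorem boundaryMetric_add_mul_sq_le {a : ℝ} (ha : 0 ≤ a)
    (hd : ∀ᶠ w in 𝓝 z, DifferentiableAt ℝ d w) (hd' : DifferentiableAt ℝ (fderiv ℝ d) z)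
    (hz : d z < 0) (haz : a * -d z ≤ 1 / 6) {X : Cn n}
    (hX : 0 ≤ leviPart (fderiv ℝ (fderiv ℝ fun z => d z + a * d z ^ 2) z) X) :
    boundaryMetric (fun z => d z + a * d z ^ 2) z X ≤
      (1 + a * -d z) * boundaryMetric d z X := by
  set δ := -d z with hδ_def
  have hδ : 0 < δ := neg_pos.2 hz
  have hdz : d z = -δ := (neg_neg _).symm
  have hτ : 0 < 1 - a * δ := by linarith
  rw [leviPart_add_mul_sq a hd hd', hdz] at hX
  rw [boundaryMetric, boundaryMetric, leviPart_add_mul_sq a hd hd',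
    norm_delForm_add_mul_sq a hd.self_of_nhds, hdz,
    ← Real.sqrt_sq (show 0 ≤ 1 + a * δ by positivity), ← Real.sqrt_mul (sq_nonneg _)]
  set N := ‖delForm (fderiv ℝ d z) X‖ ^ 2
  set L := leviPart (fderiv ℝ (fderiv ℝ d) z) X
  refine Real.sqrt_le_sqrt ?_
  convert sq_mul_div_add_div_le ⟨mul_nonneg ha hδ.le, haz⟩
    (div_nonneg (sq_nonneg _) (sq_nonneg δ) : 0 ≤ N / δ ^ 2) (y := L / δ) ?_ using 1
  · have : -δ + a * (-δ) ^ 2 = -(δ * (1 - a * δ)) := by ring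
    rw [this, neg_neg, neg_sq]
    field_simp
    ring
  · rw [neg_sq, neg_neg]
  · have : (1 - 2 * (a * δ)) * (L / δ) + 2 * (a * δ) * (N / δ ^ 2) =
        ((1 + 2 * a * -δ) * L + 2 * a * N) / δ := by
      field_simp
      ring
    exact this ▸ div_nonneg hX hδ.le

theorem ContDiffHolderAt.hasOsculatingDiscs {k : ℕ} {ε : ℝ≥0} {r : Cn n → ℝ} {p : Cn n} {c : ℝ}
    (hk : k = 0 ∨ k = 1) (hε : ε ≤ 1) (hr : ContDiffHolderAt ε (k + 2) r p)
    (hp : fderiv ℝ r p ≠ 0) (hc : 0 < c)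
    (hlevi : ∀ X, c * ‖X‖ ^ 2 ≤ leviPart (fderiv ℝ (fderiv ℝ r) p) X) :
    HasOsculatingDiscs ((k + ε) / 2) r p := by
  rcases hk with rfl | rfl
  · simpa using hr.hasOsculatingDiscs_two hε hp
  · simpa using hr.hasOsculatingDiscs_three hε hp hc hlevi

theorem exists_le_leviPart_add_mul_sq {d : Cn n → ℝ} {p : Cn n}
    (hd : ∀ᶠ w in 𝓝 p, DifferentiableAt ℝ d w) (hd' : DifferentiableAt ℝ (fderiv ℝ d) p)
    (hdp : d p = 0)
    (hlevi : ∀ X, X ≠ 0 → delForm (fderiv ℝ d p) X = 0 →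
      0 < leviPart (fderiv ℝ (fderiv ℝ d) p) X) :
    ∃ a ≥ 0, ∃ c > 0, ∀ X, c * ‖X‖ ^ 2 ≤
      leviPart (fderiv ℝ (fderiv ℝ fun z => d z + a * d z ^ 2) p) X := by
  obtain ⟨a, ha, c, hc, hac⟩ := exists_le_leviPart_add hlevi
  refine ⟨a / 2, by positivity, c, hc, fun X => (hac X).trans_eq ?_⟩
  rw [leviPart_add_mul_sq _ hd hd', hdp]
  ring

theorem eventually_boundaryMetric_add_mul_sq_le {d : Cn n → ℝ} {p : Cn n} {a : ℝ} (ha : 0 ≤ a)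
    (hd : ∀ᶠ w in 𝓝 p, DifferentiableAt ℝ d w)
    (hd' : ∀ᶠ w in 𝓝 p, DifferentiableAt ℝ (fderiv ℝ d) w) (hdp : d p = 0)
    (hlevi : ∀ᶠ z in 𝓝 p, ∀ X, 0 ≤ leviPart (fderiv ℝ (fderiv ℝ fun z => d z + a * d z ^ 2) z) X) :
    ∀ᶠ z in 𝓝 p, d z < 0 → d z + a * d z ^ 2 < 0 ∧ ∀ X,
      boundaryMetric (fun z => d z + a * d z ^ 2) z X ≤
        (1 + a * -d z) * boundaryMetric d z X := by
  have hsmall : ∀ᶠ z in 𝓝 p, a * -d z < 1 / 6 :=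
    (continuousAt_const.mul hd.self_of_nhds.continuousAt.neg).eventually_lt continuousAt_const
      (by simp [hdp])
  filter_upwards [hd.eventually_nhds, hd', hlevi, hsmall] with z hd hd' hlevi hsmall hz
  refine ⟨?_, fun X => boundaryMetric_add_mul_sq_le ha hd hd' hz hsmall.le (hlevi X)⟩
  have : d z * (1 + a * d z) < 0 := mul_neg_of_neg_of_pos hz (by linarith)
  linarith

theorem one_add_mul_rpow_mul_le {a C e s t : ℝ} (ha : 0 ≤ a) (hC : 0 ≤ C)
    (he : e ∈ Set.Icc (0 : ℝ) 1) (hs : s ∈ Set.Ioc 0 t) (ht : t ≤ 1) :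
    (1 + C * s ^ e) * (1 + a * t) ≤ 1 + (C + a + C * a) * t ^ e := by
  have ht₀ : 0 < t := hs.1.trans_le hs.2
  calc (1 + C * s ^ e) * (1 + a * t) ≤ (1 + C * t ^ e) * (1 + a * t ^ e) := by
        have := Real.self_le_rpow_of_le_one ht₀.le ht he.2
        have := Real.rpow_le_rpow hs.1.le hs.2 he.1
        gcongr
    _ = 1 + (C + a + C * a * t ^ e) * t ^ e := by ring
    _ ≤ 1 + (C + a + C * a * 1) * t ^ e := by
        have := Real.rpow_le_one ht₀.le ht he.1
        gcongr
    _ = 1 + (C + a + C * a) * t ^ e := by rw [mul_one]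

theorem natCast_add_div_two_mem_Ioc {k : ℕ} {ε : ℝ≥0} (hk : k = 0 ∨ k = 1) (hε : ε ∈ Set.Ioc 0 1) :
    ((k : ℝ) + ε) / 2 ∈ Set.Ioc (0 : ℝ) 1 := by
  have h₀ : (0 : ℝ) < ε := hε.1
  have h₁ : (ε : ℝ) ≤ 1 := hε.2
  rcases hk with rfl | rfl <;> constructor <;> norm_num <;> linarith

theorem ContDiffHolderAt.exists_kobayashi_le {k : ℕ} {ε : ℝ≥0} {d : Cn n → ℝ} {p : Cn n}
    {Ω : Set (Cn n)} (hk : k = 0 ∨ k = 1) (hε : ε ∈ Set.Ioc 0 1)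
    (hd : ContDiffHolderAt ε (k + 2) d p) (hdp : d p = 0) (hdp' : fderiv ℝ d p ≠ 0)
    (hlevi : ∀ X, X ≠ 0 → delForm (fderiv ℝ d p) X = 0 →
      0 < leviPart (fderiv ℝ (fderiv ℝ d) p) X)
    (hΩ : ∀ᶠ z in 𝓝 p, d z < 0 → z ∈ Ω) :
    ∃ C > 0, ∀ᶠ z in 𝓝 p, d z < 0 → ∀ X, kobayashi Ω z X ≤
      (1 + C * (-d z) ^ (((k : ℝ) + ε) / 2)) * boundaryMetric d z X := by
  have he := natCast_add_div_two_mem_Ioc hk hε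
  have hd₁ := (ContDiffHolderAt.succ_iff.1 hd).1
  have hd₂ := (ContDiffHolderAt.succ_iff.1 (ContDiffHolderAt.succ_iff.1 hd).2).1
  obtain ⟨a, ha, c, hc, hac⟩ :=
    exists_le_leviPart_add_mul_sq hd₁ hd₂.self_of_nhds hdp hlevi
  set r : Cn n → ℝ := fun z => d z + a * d z ^ 2 with hr_def
  have hdr (z : Cn n) : d z ≤ r z := le_add_of_nonneg_right (by positivity)
  have hr : ContDiffHolderAt ε (k + 2) r p :=
    contDiffAt_comp hε.2 (g := fun t : ℝ => t + a * t ^ 2) (by fun_prop) hd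
  have hrp : r p = 0 := by simp [hr_def, hdp]
  have hrp' : fderiv ℝ r p ≠ 0 := by
    rwa [fderiv_add_mul_sq a hd₁.self_of_nhds, hdp, mul_zero, add_zero, one_smul]
  have hrlevi := eventually_le_leviPart
    (ContDiffHolderAt.succ_iff.1 (ContDiffHolderAt.succ_iff.1 hr).2).2.continuousAt
    (half_lt_self hc) hac
  have hcomp := eventually_boundaryMetric_add_mul_sq_le ha hd₁ hd₂ hdp
    (hrlevi.mono fun z hz X => le_trans (by positivity) (hz X))
  obtain ⟨C, hC, hκ⟩ := (hr.hasOsculatingDiscs hk hε.2 hrp' hc hac).exists_kobayashi_le he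
    hr.continuousAt hrp (hΩ.mono fun z hz hrz => hz ((hdr z).trans_lt hrz)) (half_pos hc) hrlevi
  refine ⟨C + a + C * a, by positivity, ?_⟩
  filter_upwards [hκ, hcomp, hd.continuousAt.eventually (lt_mem_nhds (hdp ▸ neg_one_lt_zero))]
    with z hκ hcomp hdz₁ hdz X
  obtain ⟨hr₀, hM⟩ := hcomp hdz
  calc kobayashi Ω z X ≤ _ := hκ hr₀ X
    _ ≤ (1 + C * (-r z) ^ (((k : ℝ) + ε) / 2)) *
        ((1 + a * -d z) * boundaryMetric d z X) := by
      have : 0 ≤ -r z := neg_nonneg.2 hr₀.le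
      gcongr
      exact hM X
    _ ≤ (1 + (C + a + C * a) * (-d z) ^ (((k : ℝ) + ε) / 2)) * boundaryMetric d z X := by
      rw [← mul_assoc]
      exact mul_le_mul_of_nonneg_right (one_add_mul_rpow_mul_le ha hC.le ⟨he.1.le, he.2⟩
        ⟨neg_pos.2 hr₀, neg_le_neg (hdr z)⟩ (neg_le.1 hdz₁.le)) (Real.sqrt_nonneg _)

end DefiningFunction

section UpperEstimate

open Filter Topology

theorem cderiv_eq_delForm (ρ : Cn n → ℝ) (z X : Cn n) :
    cderiv ρ z X = delForm (fderiv ℝ ρ z) X :=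
  (delForm_apply _ X).symm

theorem leviForm_eq_leviPart {ρ : Cn n → ℝ} {z : Cn n} (hρ : DifferentiableAt ℝ (fderiv ℝ ρ) z)
    (X : Cn n) : leviForm ρ z X = leviPart (fderiv ℝ (fderiv ℝ ρ) z) X := by
  have happly (v : Cn n) :
      fderiv ℝ (fun w => fderiv ℝ ρ w v) z v = fderiv ℝ (fderiv ℝ ρ) z v v := by
    rw [fderiv_clm_apply hρ (differentiableAt_const v)]
    simp
  rw [leviForm, happly, happly, leviPart]

theorem Mfun_eq_boundaryMetric {Ω : Set (Cn n)} {d : Cn n → ℝ} {z : Cn n}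
    (h : bdist Ω =ᶠ[𝓝 z] fun w => -d w) (hd : DifferentiableAt ℝ (fderiv ℝ d) z) (X : Cn n) :
    Mfun Ω z X = boundaryMetric d z X := by
  have hfderiv : fderiv ℝ (fun w => -bdist Ω w) =ᶠ[𝓝 z] fderiv ℝ d :=
    EventuallyEq.fderiv (h.mono fun w hw => by simp [hw])
  have hnorm : ‖cderiv (bdist Ω) z X‖ = ‖delForm (fderiv ℝ d z) X‖ := by
    rw [cderiv_eq_delForm, ← pow_left_inj₀ (norm_nonneg _) (norm_nonneg _) two_ne_zero,
      norm_delForm_apply_sq, norm_delForm_apply_sq, h.fderiv_eq, fderiv_fun_neg]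
    simp
  rw [Mfun, boundaryMetric, hnorm, h.self_of_nhds, neg_sq,
    leviForm_eq_leviPart (hd.congr_of_eventuallyEq hfderiv), hfderiv.fderiv_eq]

theorem IsNormalProjection.leviPart_dist_pos {ε : ℝ≥0} {m : ℕ} {ρ d : Cn n → ℝ}
    {Q : Cn n → Cn n} {p : Cn n} (h : IsNormalProjection ε (m + 1) ρ p Q d) (hε : ε ≤ 1)
    (hρ : ContDiffHolderAt ε (m + 2) ρ p) (hp : fderiv ℝ ρ p ≠ 0)
    (hlevi : ∀ X, X ≠ 0 → cderiv ρ p X = 0 → 0 < leviForm ρ p X) {X : Cn n} (hX : X ≠ 0)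
    (hdX : delForm (fderiv ℝ d p) X = 0) : 0 < leviPart (fderiv ℝ (fderiv ℝ d) p) X := by
  have hA : 0 < ‖fderiv ℝ ρ p‖⁻¹ := inv_pos.2 (norm_pos_iff.2 hp)
  have hker : fderiv ℝ ρ p X = 0 ∧ fderiv ℝ ρ p (Complex.I • X) = 0 := by
    simpa [delForm_eq_zero_iff, h.fderiv_dist_self hε hρ hp, hp] using hdX
  have hρX := hlevi X hX (by rwa [cderiv_eq_delForm, delForm_eq_zero_iff])
  rw [leviForm_eq_leviPart (ContDiffHolderAt.succ_iff.1
    (ContDiffHolderAt.succ_iff.1 hρ).2).1.self_of_nhds] at hρX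
  rw [leviPart, h.fderiv_fderiv_dist_self hε hρ hp hker.1 hker.1,
    h.fderiv_fderiv_dist_self hε hρ hp hker.2 hker.2, ← mul_add, mul_div_assoc]
  exact mul_pos hA hρX

theorem kobayashi_upper_estimate_general {k : ℕ} {ε : ℝ≥0} {Ω : Set (Cn n)} {ρ : Cn n → ℝ}
    {p : Cn n} (hk : k = 0 ∨ k = 1) (hε : ε ∈ Set.Ioc 0 1) (hΩ : IsOpen Ω) (hpΩ : p ∈ frontier Ω)
    (hρ : ContDiffHolderAt ε (k + 2) ρ p) (hΩρ : ∀ᶠ z in 𝓝 p, z ∈ Ω ↔ ρ z < 0)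
    (hp : fderiv ℝ ρ p ≠ 0) (hlevi : ∀ X, X ≠ 0 → cderiv ρ p X = 0 → 0 < leviForm ρ p X) :
    ∃ (C : ℝ) (U : Set (Cn n)), 0 < C ∧ IsOpen U ∧ p ∈ U ∧ ∀ z ∈ Ω ∩ U, ∀ X : Cn n,
      kobayashi Ω z X ≤ (1 + C * bdist Ω z ^ (((k : ℝ) + ε) / 2)) * Mfun Ω z X := by
  have hρp : ρ p = 0 :=
    (mem_frontier_iff_eq_zero hΩ (hρ.contDiffAt.of_le (by norm_cast; omega)) hp hΩρ).self_of_nhds.1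
      hpΩ
  obtain ⟨Q, d, h⟩ := exists_isNormalProjection hε.2 hρ hρp hp
  have hd := h.contDiffHolderAt_dist hε.2 hρ hp
  have hdp : fderiv ℝ d p ≠ 0 := by
    rw [h.fderiv_dist_self hε.2 hρ hp]
    simpa using hp
  have hsign := hΩρ.and (h.neg_iff hε.2 hρ hp)
  obtain ⟨C, hC, hκ⟩ := hd.exists_kobayashi_le hk hε h.dist_self hdp
    (fun X => h.leviPart_dist_pos hε.2 hρ hp hlevi)
    (hsign.mono fun z hz hdz => hz.1.2 (hz.2.2 hdz))
  have hbdist := h.infDist_frontier hε.2 hρ hp hΩ hpΩ hΩρ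
  obtain ⟨U, hU, hUo, hpU⟩ := _root_.eventually_nhds_iff.1 (((hκ.and hsign).and
    (ContDiffHolderAt.succ_iff.1 (ContDiffHolderAt.succ_iff.1 hd).2).1).and
    hbdist.eventually_nhds)
  refine ⟨C, U, hC, hUo, hpU, fun z ⟨hzΩ, hzU⟩ X => ?_⟩
  obtain ⟨⟨⟨hκ, hsign⟩, hdd⟩, hbdist⟩ := hU z hzU
  have heq : bdist Ω =ᶠ[𝓝 z] fun w => -d w := by
    filter_upwards [hbdist, hΩ.mem_nhds hzΩ] with w hw using hw
  rw [Mfun_eq_boundaryMetric heq hdd, heq.self_of_nhds]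
  exact hκ (hsign.2.1 (hsign.1.1 hzΩ)) X

theorem IsStrictPscPtHolder.exists_contDiffHolderAt {Ω : Set (Cn n)} {p : Cn n} {m : ℕ} {ε : ℝ}
    (h : IsStrictPscPtHolder Ω p m ε) : ∃ ρ : Cn n → ℝ, ContDiffHolderAt ε.toNNReal m ρ p ∧
      (∀ᶠ z in 𝓝 p, z ∈ Ω ↔ ρ z < 0) ∧ fderiv ℝ ρ p ≠ 0 ∧
      ∀ X, X ≠ 0 → cderiv ρ p X = 0 → 0 < leviForm ρ p X := by
  obtain ⟨hpΩ, W, hW, hpW, ρ, hρ, ⟨C, hC⟩, hΩ, hne, hlevi⟩ := h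
  refine ⟨ρ, ⟨hρ.contDiffAt (hW.mem_nhds hpW), C, W, hW.mem_nhds hpW, hC⟩, ?_,
    hne p ⟨hpΩ, hpW⟩, hlevi p ⟨hpΩ, hpW⟩⟩
  filter_upwards [hW.mem_nhds hpW] with z hz
  simpa [hz] using Set.ext_iff.1 hΩ z

end UpperEstimate

/-- Under assumption (∗), the Kobayashi metric satisfies the upper estimate
`κ_Ω(z;X) ≤ (1 + C·δ_Ω(z)^ε_k)·M(z;X)` near `p`. -/
theorem kobayashi_upper_estimate (n : ℕ) (ε : ℝ) (hε : ε ∈ Set.Ioc (0 : ℝ) 1) (k : ℕ) (hk : k = 0 ∨ k = 1)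
    (Ω : Set (Cn n)) (hopen : IsOpen Ω) (hconn : IsConnected Ω) (p : Cn n) (hp : IsStrictPscPtHolder Ω p (k + 2) ε) :
    ∃ (C : ℝ) (U : Set (Cn n)), 0 < C ∧ IsOpen U ∧ p ∈ U ∧
      ∀ z ∈ Ω ∩ U, ∀ X : Cn n,
        kobayashi Ω z X ≤ (1 + C * bdist Ω z ^ (((k : ℝ) + ε) / 2)) * Mfun Ω z X := by
  obtain ⟨ρ, hρ, hΩρ, hρp, hlevi⟩ := hp.exists_contDiffHolderAt
  simpa [hε.1.le] using kobayashi_upper_estimate_general hk (by simpa using hε) hopen hp.1 hρ hΩρ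
    hρp hlevi

end
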